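/- (Lemma 5.1, outgoing cut-off.) Let n ≥ 2 and suppose Assumption A holds. Fix σ_∞ ∈ (−1,0), ν ∈ (0,μ), γ ∈ (0,1), δ ∈ (0,1/4) and σ_∞ < σ < σ' < 0. Then there exist R₀ > 0 and C₀ > 1 such that for every R ≥ R₀ there exists a function ζ₊ ∈ S^{0,0} with values in [0,1] satisfying: supp ζ₊ ⊂ Γ₊(4δ, σ, R); ζ₊(x,ξ) = 1 for all (x,ξ) ∈ Γ₊(δ, σ', C₀R); and there is a function ρ ∈ S^{0,−1+γ} with {p₂, ζ₊}(x,ξ) ≤ ρ(x,ξ) for all (x,ξ) ∈ ℝ²ⁿ and supp ρ ⊂ {(x,ξ) : 1−4δ ≤ |ξ|² ≤ 1+4δ, and (|x| ≤ C₀R or σ ≤ β(x,ξ) ≤ σ')}. -/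

import Mathlib

/-!
The cut-off is `ζ = (radial cut-off) · (angular cut-off in β) · (1 - step (enF))`, where
`enF = (|ξ|² - 1)² - |x|^{-κ} (2 - β)` is the deviation of `|ξ|²` from `1`, lowered by an escape
function of small order `κ`.

The momentum `ξ` is not conserved by the Hamilton flow of `p₂`: it moves at the rate
`O(|x|^{-1-μ})`. Along the free flow the escape function `|x|^{-κ} (2 - β)` decreases at the rate
`|v| |x|^{-1-κ} (κ β (2 - β) + 1 - β²)` (`fderiv_escF`), and on `β ≥ σ > -1` the last factor is at
least `κ` once `κ` is small (`escape_rate_ge`). As `κ < μ`, this wins over the motion of `ξ` for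
large `|x|`, so `enF` is nondecreasing along the flow there (`hamD_enF_nonneg`). Where the radial
and angular cut-offs are both `1`, `ζ` is a nonincreasing function of `enF`, hence `{p₂, ζ} ≤ 0`.
Elsewhere on the support of `ζ` either `|x| ≤ 2R` or `β` lies strictly between `σ` and `σ'`, and
there `{p₂, ζ} ≤ M / |x|` by the symbol estimates (`exists_hamD_le`). So `ρ` can be taken to be
`M / |x|` times slightly wider cut-offs.

The symbol estimates are proved on the open set `shell n δ`, given by `|x| > 1` and
`||ξ|² - 1| < 4δ`, by a calculus closed under sums, products and composition with smooth functions
(`SymOn`). A symbol on the shell which vanishes off a closed subset of phase space contained in the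
shell extends by zero to a global one (`globSym_indicator`, `GlobSym.symClass`).
-/

open MeasureTheory Filter Topology

noncomputable section

/-- Euclidean norm of `x ∈ ℝⁿ`. -/
def nrm {n : ℕ} (x : Fin n → ℝ) : ℝ := Real.sqrt (∑ j, x j ^ 2)

/-- Japanese bracket `⟨x⟩ = (1 + |x|²)^{1/2}`. -/
def jap {n : ℕ} (x : Fin n → ℝ) : ℝ := Real.sqrt (1 + ∑ j, x j ^ 2)

/-- Japanese bracket of a real number. -/
def japR (t : ℝ) : ℝ := Real.sqrt (1 + t ^ 2)

/-- Euclidean inner product on `ℝⁿ`. -/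
def dotp {n : ℕ} (x y : Fin n → ℝ) : ℝ := ∑ j, x j * y j

/-- Partial derivative in the `j`-th coordinate direction. -/
def pd {n : ℕ} {F : Type} [NormedAddCommGroup F] [NormedSpace ℝ F]
    (j : Fin n) (f : (Fin n → ℝ) → F) (x : Fin n → ℝ) : F :=
  fderiv ℝ f x (Pi.single j 1)

/-- Iterated partial derivatives along a list of coordinate indices
(encoding a multi-index). -/
def pdL {n : ℕ} {F : Type} [NormedAddCommGroup F] [NormedSpace ℝ F] :
    List (Fin n) → ((Fin n → ℝ) → F) → (Fin n → ℝ) → F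
  | [], f => f
  | j :: L, f => pd j (pdL L f)

/-- `D_j = -i ∂_j`. -/
def Dop {n : ℕ} (j : Fin n) (φ : (Fin n → ℝ) → ℂ) (x : Fin n → ℝ) : ℂ :=
  -Complex.I * pd j φ x

/-- The Klein-Gordon type operator
`Pφ = Σ_{j,k} D_j(g^{jk} D_k φ) + (1/2) Σ_j (D_j(u_j φ) + u_j D_j φ) + u_0 φ`. -/
def Pop {n : ℕ} (g : Fin n → Fin n → (Fin n → ℝ) → ℝ)
    (u : Fin (n + 1) → (Fin n → ℝ) → ℝ) (φ : (Fin n → ℝ) → ℂ) (x : Fin n → ℝ) : ℂ :=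
  (∑ j, ∑ k, Dop j (fun y => (g j k y : ℂ) * Dop k φ y) x)
    + (1 / 2) * (∑ j, (Dop j (fun y => (u j.succ y : ℂ) * φ y) x
        + (u j.succ x : ℂ) * Dop j φ x))
    + (u 0 x : ℂ) * φ x

/-- The principal symbol `p₂(x,ξ) = Σ g^{jk}(x) ξ_j ξ_k`. -/
def p2 {n : ℕ} (g : Fin n → Fin n → (Fin n → ℝ) → ℝ) (x ξ : Fin n → ℝ) : ℝ :=
  ∑ j, ∑ k, g j k x * ξ j * ξ k

/-- `v(ξ) = ∂_ξ p₀(ξ) = 2 g₀ ξ` for the constant cometric `g₀`. -/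
def vv {n : ℕ} (g₀ : Fin n → Fin n → ℝ) (ξ : Fin n → ℝ) : Fin n → ℝ :=
  fun j => 2 * ∑ k, g₀ j k * ξ k

/-- `v̂(ξ) = v(ξ)/|v(ξ)|`. -/
def vhat {n : ℕ} (g₀ : Fin n → Fin n → ℝ) (ξ : Fin n → ℝ) : Fin n → ℝ :=
  (nrm (vv g₀ ξ))⁻¹ • vv g₀ ξ

/-- `β(x,ξ) = x̂ · v̂(ξ)`. -/
def betaF {n : ℕ} (g₀ : Fin n → Fin n → ℝ) (x ξ : Fin n → ℝ) : ℝ :=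
  dotp ((nrm x)⁻¹ • x) (vhat g₀ ξ)

/-- `x^⊥_ξ = x − (x·v̂(ξ)) v̂(ξ)`. -/
def perpx {n : ℕ} (g₀ : Fin n → Fin n → ℝ) (x ξ : Fin n → ℝ) : Fin n → ℝ :=
  x - dotp x (vhat g₀ ξ) • vhat g₀ ξ

/-- `τ(x,ξ) = c₀ √(|x|² − (x·v̂(ξ))²) − x·v̂(ξ)`. -/
def tauF {n : ℕ} (g₀ : Fin n → Fin n → ℝ) (c₀ : ℝ) (x ξ : Fin n → ℝ) : ℝ :=
  c₀ * Real.sqrt (nrm x ^ 2 - dotp x (vhat g₀ ξ) ^ 2) - dotp x (vhat g₀ ξ)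

/-- Partial derivative of a symbol in the `j`-th `x`-direction. -/
def pdx {n : ℕ} (j : Fin n) (a : (Fin n → ℝ) → (Fin n → ℝ) → ℝ) :
    (Fin n → ℝ) → (Fin n → ℝ) → ℝ :=
  fun x ξ => fderiv ℝ (fun y => a y ξ) x (Pi.single j 1)

/-- Partial derivative of a symbol in the `j`-th `ξ`-direction. -/
def pdxi {n : ℕ} (j : Fin n) (a : (Fin n → ℝ) → (Fin n → ℝ) → ℝ) :
    (Fin n → ℝ) → (Fin n → ℝ) → ℝ :=
  fun x ξ => fderiv ℝ (fun ζ => a x ζ) ξ (Pi.single j 1)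

/-- Iterated `x`-derivatives of a symbol. -/
def pdxL {n : ℕ} : List (Fin n) → ((Fin n → ℝ) → (Fin n → ℝ) → ℝ) →
    (Fin n → ℝ) → (Fin n → ℝ) → ℝ
  | [], a => a
  | j :: L, a => pdx j (pdxL L a)

/-- Iterated `ξ`-derivatives of a symbol. -/
def pdxiL {n : ℕ} : List (Fin n) → ((Fin n → ℝ) → (Fin n → ℝ) → ℝ) →
    (Fin n → ℝ) → (Fin n → ℝ) → ℝ
  | [], a => a
  | j :: L, a => pdxi j (pdxiL L a)

/-- Poisson bracket `{a,b} = ∂_ξ a · ∂_x b − ∂_x a · ∂_ξ b`. -/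
def PB {n : ℕ} (a b : (Fin n → ℝ) → (Fin n → ℝ) → ℝ) :
    (Fin n → ℝ) → (Fin n → ℝ) → ℝ :=
  fun x ξ => ∑ j, (pdxi j a x ξ * pdx j b x ξ - pdx j a x ξ * pdxi j b x ξ)

/-- The symbol class `S^{k,ℓ} = S(⟨x⟩^ℓ⟨ξ⟩^k, dx²/⟨x⟩² + dξ²/⟨ξ⟩²)`. -/
def SymClass {n : ℕ} (k ℓ : ℝ) (a : (Fin n → ℝ) → (Fin n → ℝ) → ℝ) : Prop :=
  ContDiff ℝ (⊤ : ℕ∞) (fun p : (Fin n → ℝ) × (Fin n → ℝ) => a p.1 p.2) ∧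
  ∀ Lx Lξ : List (Fin n), ∃ C > 0, ∀ x ξ,
    |pdxL Lx (pdxiL Lξ a) x ξ| ≤
      C * jap x ^ (ℓ - (Lx.length : ℝ)) * jap ξ ^ (k - (Lξ.length : ℝ))

/-- The incoming region `Γ₋(δ,σ,R)`. -/
def Gm {n : ℕ} (g₀ : Fin n → Fin n → ℝ) (δ σ R : ℝ) :
    Set ((Fin n → ℝ) × (Fin n → ℝ)) :=
  {p | 1 - δ ≤ nrm p.2 ^ 2 ∧ nrm p.2 ^ 2 ≤ 1 + δ ∧ betaF g₀ p.1 p.2 ≤ σ ∧ R ≤ nrm p.1}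

/-- The outgoing region `Γ₊(δ,σ,R)`. -/
def Gp {n : ℕ} (g₀ : Fin n → Fin n → ℝ) (δ σ R : ℝ) :
    Set ((Fin n → ℝ) × (Fin n → ℝ)) :=
  {p | 1 - δ ≤ nrm p.2 ^ 2 ∧ nrm p.2 ^ 2 ≤ 1 + δ ∧ σ ≤ betaF g₀ p.1 p.2 ∧ R ≤ nrm p.1}

/-- Assumption A for the top-order coefficients `g^{jk}`: smooth, real-valued,
symmetric, everywhere nondegenerate, asymptotically flat with rate `⟨x⟩^{-μ-|α|}`
towards a constant nondegenerate symmetric matrix `g₀`. -/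
structure AssumpG {n : ℕ} (g : Fin n → Fin n → (Fin n → ℝ) → ℝ)
    (g₀ : Fin n → Fin n → ℝ) (μ : ℝ) : Prop where
  smooth : ∀ j k, ContDiff ℝ (⊤ : ℕ∞) (g j k)
  symm : ∀ j k x, g j k x = g k j x
  nondeg : ∀ x (ξ : Fin n → ℝ), (∀ j, ∑ k, g j k x * ξ k = 0) → ξ = 0
  symm0 : ∀ j k, g₀ j k = g₀ k j
  nondeg0 : ∀ ξ : Fin n → ℝ, (∀ j, ∑ k, g₀ j k * ξ k = 0) → ξ = 0
  decay : ∀ L : List (Fin n), ∃ C > 0, ∀ j k x,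
    |pdL L (fun y => g j k y - g₀ j k) x| ≤ C * jap x ^ (-μ - (L.length : ℝ))

/-- Assumption A for the lower-order coefficients `u_j`, `j = 0,…,n`:
smooth, real-valued, with symbol-type decay `⟨x⟩^{-μ-|α|}`. -/
structure AssumpU {n : ℕ} (u : Fin (n + 1) → (Fin n → ℝ) → ℝ) (μ : ℝ) : Prop where
  smooth : ∀ j, ContDiff ℝ (⊤ : ℕ∞) (u j)
  decay : ∀ L : List (Fin n), ∃ C > 0, ∀ j x,
    |pdL L (u j) x| ≤ C * jap x ^ (-μ - (L.length : ℝ))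

/-- `∂_ξ p₂(x,ξ)` (the `x`-component of the Hamilton vector field). -/
def HamX {n : ℕ} (g : Fin n → Fin n → (Fin n → ℝ) → ℝ) (x ξ : Fin n → ℝ) :
    Fin n → ℝ :=
  fun j => fderiv ℝ (fun ζ => p2 g x ζ) ξ (Pi.single j 1)

/-- `−∂_x p₂(x,ξ)` (the `ξ`-component of the Hamilton vector field). -/
def HamXi {n : ℕ} (g : Fin n → Fin n → (Fin n → ℝ) → ℝ) (x ξ : Fin n → ℝ) :
    Fin n → ℝ :=
  fun j => -(fderiv ℝ (fun y => p2 g y ξ) x (Pi.single j 1))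

/-- Assumption B (null non-trapping): every null bicharacteristic with `ξ₀ ≠ 0`
is global and escapes to spatial infinity in both time directions. -/
def AssumptionB {n : ℕ} (g : Fin n → Fin n → (Fin n → ℝ) → ℝ) : Prop :=
  ∀ x₀ ξ₀ : Fin n → ℝ, p2 g x₀ ξ₀ = 0 → ξ₀ ≠ 0 →
    ∃ y η : ℝ → (Fin n → ℝ), y 0 = x₀ ∧ η 0 = ξ₀ ∧
      (∀ t, HasDerivAt y (HamX g (y t) (η t)) t) ∧
      (∀ t, HasDerivAt η (HamXi g (y t) (η t)) t) ∧
      Tendsto (fun t => nrm (y t)) atTop atTop ∧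
      Tendsto (fun t => nrm (y t)) atBot atTop

/-- A test function: smooth and compactly supported. -/
def IsTest {n : ℕ} (φ : (Fin n → ℝ) → ℂ) : Prop :=
  ContDiff ℝ (⊤ : ℕ∞) φ ∧ HasCompactSupport φ

end

noncomputable section

/-! ### Symbol calculus on an open set -/

/-- Phase space `ℝⁿ × ℝⁿ` with points `(x, ξ)`. -/
abbrev Phase (n : ℕ) : Type := (Fin n → ℝ) × (Fin n → ℝ)

/-- Coordinate directions of phase space: `inl j` is the `x_j`-direction, `inr j` the
`ξ_j`-direction. -/
def phaseDir {n : ℕ} : Fin n ⊕ Fin n → Phase n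
  | .inl j => (Pi.single j 1, 0)
  | .inr j => (0, Pi.single j 1)

/-- The gain of decay in `x` produced by a derivative: one for `x_j`, none for `ξ_j`. -/
def phaseOrd {n : ℕ} : Fin n ⊕ Fin n → ℝ
  | .inl _ => 1
  | .inr _ => 0

/-- Partial derivative of a function on phase space. -/
def phaseD {n : ℕ} (i : Fin n ⊕ Fin n) (a : Phase n → ℝ) (p : Phase n) : ℝ :=
  fderiv ℝ a p (phaseDir i)

/-- Symbol estimates of order `ℓ` in `x`, on the set `U`, for all derivatives of order at
most `k`; no decay in `ξ` is recorded, since `ξ` will stay in a compact set. -/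
def SymN {n : ℕ} (U : Set (Phase n)) : ℕ → ℝ → (Phase n → ℝ) → Prop
  | 0, ℓ, a => ∃ C, ∀ p ∈ U, |a p| ≤ C * jap p.1 ^ ℓ
  | k + 1, ℓ, a => (∃ C, ∀ p ∈ U, |a p| ≤ C * jap p.1 ^ ℓ) ∧
      ∀ i, SymN U k (ℓ - phaseOrd i) (phaseD i a)

/-- Smooth functions on `U` satisfying the symbol estimates of order `ℓ` in `x`. -/
def SymOn {n : ℕ} (U : Set (Phase n)) (ℓ : ℝ) (a : Phase n → ℝ) : Prop :=
  ContDiffOn ℝ (⊤ : ℕ∞) a U ∧ ∀ k, SymN U k ℓ a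

lemma one_le_jap {n : ℕ} (x : Fin n → ℝ) : 1 ≤ jap x := by
  unfold jap
  rw [Real.one_le_sqrt]
  have : 0 ≤ ∑ j, x j ^ 2 := Finset.sum_nonneg fun j _ => sq_nonneg _
  linarith

lemma jap_pos {n : ℕ} (x : Fin n → ℝ) : 0 < jap x := lt_of_lt_of_le one_pos (one_le_jap x)

variable {n : ℕ} {U : Set (Phase n)}

lemma SymN.bound {k : ℕ} {ℓ : ℝ} {a : Phase n → ℝ} (h : SymN U k ℓ a) :
    ∃ C, ∀ p ∈ U, |a p| ≤ C * jap p.1 ^ ℓ := by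
  cases k with
  | zero => exact h
  | succ k => exact h.1

lemma SymN.down {k : ℕ} : ∀ {ℓ : ℝ} {a : Phase n → ℝ}, SymN U (k + 1) ℓ a → SymN U k ℓ a := by
  induction k with
  | zero => intro ℓ a h; exact h.1
  | succ k ih => intro ℓ a h; exact ⟨h.1, fun i => ih (h.2 i)⟩

lemma phaseD_congr (hU : IsOpen U) {a b : Phase n → ℝ} (hab : Set.EqOn a b U) (i : Fin n ⊕ Fin n) :
    Set.EqOn (phaseD i a) (phaseD i b) U := by
  intro p hp
  have : a =ᶠ[𝓝 p] b := Filter.eventuallyEq_of_mem (hU.mem_nhds hp) hab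
  simp only [phaseD, this.fderiv_eq]

lemma SymN.congr (hU : IsOpen U) {k : ℕ} : ∀ {ℓ : ℝ} {a b : Phase n → ℝ},
    SymN U k ℓ a → Set.EqOn a b U → SymN U k ℓ b := by
  have key : ∀ {ℓ : ℝ} {a b : Phase n → ℝ}, (∃ C, ∀ p ∈ U, |a p| ≤ C * jap p.1 ^ ℓ) →
      Set.EqOn a b U → ∃ C, ∀ p ∈ U, |b p| ≤ C * jap p.1 ^ ℓ := by
    rintro ℓ a b ⟨C, hC⟩ hab
    exact ⟨C, fun p hp => hab hp ▸ hC p hp⟩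
  induction k with
  | zero => intro ℓ a b h hab; exact key h hab
  | succ k ih =>
    intro ℓ a b h hab
    exact ⟨key h.1 hab, fun i => ih (h.2 i) (phaseD_congr hU hab i)⟩

lemma SymN.mono {k : ℕ} : ∀ {ℓ ℓ' : ℝ} {a : Phase n → ℝ}, ℓ ≤ ℓ' → SymN U k ℓ a →
    SymN U k ℓ' a := by
  have key : ∀ {ℓ ℓ' : ℝ} {a : Phase n → ℝ}, ℓ ≤ ℓ' → (∃ C, ∀ p ∈ U, |a p| ≤ C * jap p.1 ^ ℓ) →
      ∃ C, ∀ p ∈ U, |a p| ≤ C * jap p.1 ^ ℓ' := by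
    rintro ℓ ℓ' a hl ⟨C, hC⟩
    refine ⟨|C|, fun p hp => (hC p hp).trans ?_⟩
    have h1 := Real.rpow_le_rpow_of_exponent_le (one_le_jap p.1) hl
    have h2 := Real.rpow_nonneg (jap_pos p.1).le ℓ
    exact mul_le_mul (le_abs_self C) h1 h2 (abs_nonneg C)
  induction k with
  | zero => intro ℓ ℓ' a hl h; exact key hl h
  | succ k ih =>
    intro ℓ ℓ' a hl h
    exact ⟨key hl h.1, fun i => ih (by linarith) (h.2 i)⟩

lemma contDiffOn_phaseD (hU : IsOpen U) {a : Phase n → ℝ} (ha : ContDiffOn ℝ (⊤ : ℕ∞) a U)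
    (i : Fin n ⊕ Fin n) : ContDiffOn ℝ (⊤ : ℕ∞) (phaseD i a) U :=
  (ha.fderiv_of_isOpen hU (by simp)).clm_apply contDiffOn_const

lemma SymN.add (hU : IsOpen U) {k : ℕ} : ∀ {ℓ : ℝ} {a b : Phase n → ℝ},
    ContDiffOn ℝ (⊤ : ℕ∞) a U → ContDiffOn ℝ (⊤ : ℕ∞) b U →
    SymN U k ℓ a → SymN U k ℓ b → SymN U k ℓ (fun p => a p + b p) := by
  have key : ∀ {ℓ : ℝ} {a b : Phase n → ℝ}, (∃ C, ∀ p ∈ U, |a p| ≤ C * jap p.1 ^ ℓ) →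
      (∃ C, ∀ p ∈ U, |b p| ≤ C * jap p.1 ^ ℓ) →
      ∃ C, ∀ p ∈ U, |a p + b p| ≤ C * jap p.1 ^ ℓ := by
    rintro ℓ a b ⟨C, hC⟩ ⟨C', hC'⟩
    refine ⟨C + C', fun p hp => (abs_add_le _ _).trans ?_⟩
    have := hC p hp
    have := hC' p hp
    linarith
  induction k with
  | zero => intro ℓ a b _ _ h h'; exact key h h'
  | succ k ih =>
    intro ℓ a b ha hb h h'
    refine ⟨key h.1 h'.1, fun i => ?_⟩
    have ha' := contDiffOn_phaseD hU ha i
    have hb' := contDiffOn_phaseD hU hb i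
    refine (ih ha' hb' (h.2 i) (h'.2 i)).congr hU fun p hp => ?_
    have da := (ha.contDiffAt (hU.mem_nhds hp)).differentiableAt (by simp)
    have db := (hb.contDiffAt (hU.mem_nhds hp)).differentiableAt (by simp)
    simp only [phaseD]
    rw [fderiv_fun_add da db]
    rfl

lemma SymN.mul (hU : IsOpen U) {k : ℕ} : ∀ {ℓ ℓ' : ℝ} {a b : Phase n → ℝ},
    ContDiffOn ℝ (⊤ : ℕ∞) a U → ContDiffOn ℝ (⊤ : ℕ∞) b U →
    SymN U k ℓ a → SymN U k ℓ' b → SymN U k (ℓ + ℓ') (fun p => a p * b p) := by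
  have key : ∀ {ℓ ℓ' : ℝ} {a b : Phase n → ℝ}, (∃ C, ∀ p ∈ U, |a p| ≤ C * jap p.1 ^ ℓ) →
      (∃ C, ∀ p ∈ U, |b p| ≤ C * jap p.1 ^ ℓ') →
      ∃ C, ∀ p ∈ U, |a p * b p| ≤ C * jap p.1 ^ (ℓ + ℓ') := by
    rintro ℓ ℓ' a b ⟨C, hC⟩ ⟨C', hC'⟩
    refine ⟨C * C', fun p hp => ?_⟩
    rw [abs_mul, Real.rpow_add (jap_pos _)]
    calc |a p| * |b p| ≤ (C * jap p.1 ^ ℓ) * (C' * jap p.1 ^ ℓ') :=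
          mul_le_mul (hC p hp) (hC' p hp) (abs_nonneg _) ((abs_nonneg _).trans (hC p hp))
      _ = _ := by ring
  induction k with
  | zero => intro ℓ ℓ' a b _ _ h h'; exact key h h'
  | succ k ih =>
    intro ℓ ℓ' a b ha hb h h'
    refine ⟨key h.1 h'.1, fun i => ?_⟩
    have ha' := contDiffOn_phaseD hU ha i
    have hb' := contDiffOn_phaseD hU hb i
    have h1 := ih ha' hb (h.2 i) h'.down
    have h2 := ih ha hb' h.down (h'.2 i)
    rw [show ℓ - phaseOrd i + ℓ' = ℓ + ℓ' - phaseOrd i by ring] at h1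
    rw [show ℓ + (ℓ' - phaseOrd i) = ℓ + ℓ' - phaseOrd i by ring] at h2
    refine (h1.add hU (ha'.mul hb) (ha.mul hb') h2).congr hU fun p hp => ?_
    have da := (ha.contDiffAt (hU.mem_nhds hp)).differentiableAt (by simp)
    have db := (hb.contDiffAt (hU.mem_nhds hp)).differentiableAt (by simp)
    simp only [phaseD]
    rw [fderiv_fun_mul da db]
    simp [mul_comm, add_comm]

/-- Composition with a smooth function of one variable preserves order zero. -/
lemma SymN.comp (hU : IsOpen U) {V K : Set ℝ} (hV : IsOpen V) (hK : IsCompact K) (hKV : K ⊆ V)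
    {a : Phase n → ℝ} (ha : ContDiffOn ℝ (⊤ : ℕ∞) a U) (haK : ∀ p ∈ U, a p ∈ K)
    (hs : ∀ k, SymN U k 0 a) {k : ℕ} : ∀ {φ : ℝ → ℝ}, ContDiffOn ℝ (⊤ : ℕ∞) φ V →
    SymN U k 0 (fun p => φ (a p)) := by
  have key : ∀ {φ : ℝ → ℝ}, ContDiffOn ℝ (⊤ : ℕ∞) φ V →
      ∃ C, ∀ p ∈ U, |φ (a p)| ≤ C * jap p.1 ^ (0 : ℝ) := by
    intro φ hφ
    obtain ⟨C, hC⟩ := hK.exists_bound_of_continuousOn (hφ.continuousOn.mono hKV)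
    exact ⟨C, fun p hp => by simpa using hC _ (haK p hp)⟩
  induction k with
  | zero => intro φ hφ; exact key hφ
  | succ k ih =>
    intro φ hφ
    refine ⟨key hφ, fun i => ?_⟩
    have hφ' : ContDiffOn ℝ (⊤ : ℕ∞) (deriv φ) V := hφ.deriv_of_isOpen hV (by simp)
    have h1 := (ih hφ').mul hU (hφ'.comp ha fun p hp => hKV (haK p hp))
      (contDiffOn_phaseD hU ha i) ((hs (k + 1)).2 i)
    rw [show (0 : ℝ) + (0 - phaseOrd i) = 0 - phaseOrd i by ring] at h1
    refine h1.congr hU fun p hp => ?_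
    have da := (ha.contDiffAt (hU.mem_nhds hp)).differentiableAt (by simp)
    have dφ := (hφ.contDiffAt (hV.mem_nhds (hKV (haK p hp)))).differentiableAt (by simp)
    have := dφ.hasDerivAt.comp_hasFDerivAt p da.hasFDerivAt
    simp only [phaseD]
    rw [show (fun p => φ (a p)) = φ ∘ a from rfl, this.fderiv]
    simp

lemma symN_zero (k : ℕ) : ∀ ℓ, SymN U k ℓ (fun _ => (0 : ℝ)) := by
  induction k with
  | zero => intro ℓ; exact ⟨0, by simp⟩
  | succ k ih =>
    intro ℓ
    refine ⟨⟨0, by simp⟩, fun i => ?_⟩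
    convert ih _ using 1
    ext p; simp [phaseD]

lemma symN_const (c : ℝ) (k : ℕ) : SymN U k 0 (fun _ => c) := by
  cases k with
  | zero => exact ⟨|c|, by simp⟩
  | succ k =>
    refine ⟨⟨|c|, by simp⟩, fun i => ?_⟩
    convert symN_zero k _ using 1
    ext p; simp [phaseD]

/-- A function with constant derivatives, such as a coordinate, is a symbol as soon as its size
and the order of its derivatives are right. -/
lemma SymN.of_const_deriv {ℓ : ℝ} {a : Phase n → ℝ} {c : Fin n ⊕ Fin n → ℝ}
    (hb : ∃ C, ∀ p ∈ U, |a p| ≤ C * jap p.1 ^ ℓ)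
    (hc : ∀ i p, phaseD i a p = c i) (hc0 : ∀ i, ℓ - phaseOrd i < 0 → c i = 0) (k : ℕ) :
    SymN U k ℓ a := by
  cases k with
  | zero => exact hb
  | succ k =>
    refine ⟨hb, fun i => ?_⟩
    rw [show phaseD i a = fun _ => c i from funext (hc i)]
    by_cases h : ℓ - phaseOrd i < 0
    · rw [hc0 i h]
      exact symN_zero k _
    · exact (symN_const (c i) k).mono (by linarith)

namespace SymOn

lemma mono {ℓ ℓ' : ℝ} {a : Phase n → ℝ} (h : SymOn U ℓ a) (hl : ℓ ≤ ℓ') : SymOn U ℓ' a :=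
  ⟨h.1, fun k => (h.2 k).mono hl⟩

lemma bound {ℓ : ℝ} {a : Phase n → ℝ} (h : SymOn U ℓ a) :
    ∃ C > 0, ∀ p ∈ U, |a p| ≤ C * jap p.1 ^ ℓ := by
  obtain ⟨C, hC⟩ := (h.2 0).bound
  refine ⟨|C| + 1, by positivity, fun p hp => (hC p hp).trans ?_⟩
  have h2 := Real.rpow_nonneg (jap_pos p.1).le ℓ
  have := le_abs_self C
  exact mul_le_mul_of_nonneg_right (by linarith) h2

lemma phaseD (hU : IsOpen U) {ℓ : ℝ} {a : Phase n → ℝ} (h : SymOn U ℓ a) (i : Fin n ⊕ Fin n) :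
    SymOn U (ℓ - phaseOrd i) (phaseD i a) :=
  ⟨contDiffOn_phaseD hU h.1 i, fun k => (h.2 (k + 1)).2 i⟩

lemma const (c : ℝ) : SymOn U 0 (fun _ => c) := ⟨contDiffOn_const, symN_const c⟩

lemma add (hU : IsOpen U) {ℓ : ℝ} {a b : Phase n → ℝ} (ha : SymOn U ℓ a) (hb : SymOn U ℓ b) :
    SymOn U ℓ (fun p => a p + b p) :=
  ⟨ha.1.add hb.1, fun k => (ha.2 k).add hU ha.1 hb.1 (hb.2 k)⟩

lemma mul (hU : IsOpen U) {ℓ ℓ' : ℝ} {a b : Phase n → ℝ} (ha : SymOn U ℓ a) (hb : SymOn U ℓ' b) :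
    SymOn U (ℓ + ℓ') (fun p => a p * b p) :=
  ⟨ha.1.mul hb.1, fun k => (ha.2 k).mul hU ha.1 hb.1 (hb.2 k)⟩

lemma mul0 (hU : IsOpen U) {a b : Phase n → ℝ} (ha : SymOn U 0 a) (hb : SymOn U 0 b) :
    SymOn U 0 (fun p => a p * b p) := by
  simpa using ha.mul hU hb

lemma const_mul (hU : IsOpen U) {ℓ : ℝ} {a : Phase n → ℝ} (c : ℝ) (ha : SymOn U ℓ a) :
    SymOn U ℓ (fun p => c * a p) := by
  simpa using (const c).mul hU ha

lemma sub (hU : IsOpen U) {ℓ : ℝ} {a b : Phase n → ℝ} (ha : SymOn U ℓ a) (hb : SymOn U ℓ b) :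
    SymOn U ℓ (fun p => a p - b p) := by
  simpa [sub_eq_add_neg] using ha.add hU (hb.const_mul hU (-1))

lemma sum (hU : IsOpen U) {ι : Type*} (s : Finset ι) {ℓ : ℝ} {a : ι → Phase n → ℝ}
    (ha : ∀ i, SymOn U ℓ (a i)) : SymOn U ℓ (fun p => ∑ i ∈ s, a i p) := by
  classical
  induction s using Finset.induction_on with
  | empty =>
    have h0 : SymOn U ℓ (fun _ : Phase n => (0 : ℝ)) :=
      ⟨contDiffOn_const, fun k => symN_zero k ℓ⟩
    simpa using h0
  | insert i s hi ih =>
    simpa [Finset.sum_insert hi] using (ha i).add hU ih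

lemma comp (hU : IsOpen U) {V K : Set ℝ} (hV : IsOpen V) (hK : IsCompact K) (hKV : K ⊆ V)
    {a : Phase n → ℝ} {φ : ℝ → ℝ} (ha : SymOn U 0 a) (haK : ∀ p ∈ U, a p ∈ K)
    (hφ : ContDiffOn ℝ (⊤ : ℕ∞) φ V) : SymOn U 0 (fun p => φ (a p)) :=
  ⟨hφ.comp ha.1 fun p hp => hKV (haK p hp),
    fun _ => SymN.comp hU hV hK hKV ha.1 haK ha.2 hφ⟩

lemma comp_smooth (hU : IsOpen U) {a : Phase n → ℝ} {φ : ℝ → ℝ} (ha : SymOn U 0 a)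
    (hφ : ContDiff ℝ (⊤ : ℕ∞) φ) : SymOn U 0 (fun p => φ (a p)) := by
  obtain ⟨C, -, hC⟩ := ha.bound
  refine ha.comp hU isOpen_univ (isCompact_Icc (a := -C) (b := C)) (Set.subset_univ _)
    (fun p hp => ?_) hφ.contDiffOn
  have := hC p hp
  rw [Real.rpow_zero, mul_one] at this
  exact abs_le.1 this

end SymOn


/-! ### From symbols on an open set to global symbols -/

lemma phaseD_inl_eq_pdx {a : (Fin n → ℝ) → (Fin n → ℝ) → ℝ} {p : Phase n} (j : Fin n)
    (ha : DifferentiableAt ℝ (fun p : Phase n => a p.1 p.2) p) :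
    pdx j a p.1 p.2 = phaseD (.inl j) (fun p : Phase n => a p.1 p.2) p := by
  have h1 : HasFDerivAt (fun y : Fin n → ℝ => (y, p.2))
      (ContinuousLinearMap.inl ℝ (Fin n → ℝ) (Fin n → ℝ)) p.1 := hasFDerivAt_prodMk_left p.1 p.2
  have := HasFDerivAt.comp p.1 (f := fun y : Fin n → ℝ => (y, p.2)) ha.hasFDerivAt h1
  simp only [pdx, phaseD, phaseDir]
  have h2 := this.fderiv
  simp only [Function.comp_def] at h2
  rw [h2]; simp

lemma phaseD_inr_eq_pdxi {a : (Fin n → ℝ) → (Fin n → ℝ) → ℝ} {p : Phase n} (j : Fin n)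
    (ha : DifferentiableAt ℝ (fun p : Phase n => a p.1 p.2) p) :
    pdxi j a p.1 p.2 = phaseD (.inr j) (fun p : Phase n => a p.1 p.2) p := by
  have h1 : HasFDerivAt (fun y : Fin n → ℝ => (p.1, y))
      (ContinuousLinearMap.inr ℝ (Fin n → ℝ) (Fin n → ℝ)) p.2 := hasFDerivAt_prodMk_right p.1 p.2
  have := HasFDerivAt.comp p.2 (f := fun y : Fin n → ℝ => (p.1, y)) ha.hasFDerivAt h1
  simp only [pdxi, phaseD, phaseDir]
  have h2 := this.fderiv
  simp only [Function.comp_def] at h2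
  rw [h2]; simp

/-- Smooth functions on phase space which are symbols on `U` and vanish off `K`. -/
def GlobSym (U K : Set (Phase n)) (ℓ : ℝ) (a : (Fin n → ℝ) → (Fin n → ℝ) → ℝ) : Prop :=
  ContDiff ℝ (⊤ : ℕ∞) (fun p : Phase n => a p.1 p.2) ∧ (∀ p ∉ K, a p.1 p.2 = 0) ∧
    SymOn U ℓ (fun p : Phase n => a p.1 p.2)

lemma phaseD_eq_zero_off {K : Set (Phase n)} (hK : IsClosed K) {A : Phase n → ℝ}
    (hA : ∀ p ∉ K, A p = 0) (i : Fin n ⊕ Fin n) {p : Phase n} (hp : p ∉ K) :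
    phaseD i A p = 0 := by
  rw [phaseD_congr hK.isOpen_compl (b := fun _ => 0) (fun p hp => hA p hp) i hp]
  simp [phaseD]

lemma GlobSym.pdx (hU : IsOpen U) {K : Set (Phase n)} (hK : IsClosed K) {ℓ : ℝ}
    {a : (Fin n → ℝ) → (Fin n → ℝ) → ℝ} (h : GlobSym U K ℓ a) (j : Fin n) :
    GlobSym U K (ℓ - 1) (pdx j a) := by
  have e : (fun p : Phase n => _root_.pdx j a p.1 p.2) =
      phaseD (.inl j) (fun p : Phase n => a p.1 p.2) :=
    funext fun p => phaseD_inl_eq_pdx j (h.1.differentiable (by simp) p)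
  refine ⟨?_, fun p hp => ?_, ?_⟩
  · rw [e, ← contDiffOn_univ]
    exact contDiffOn_phaseD isOpen_univ h.1.contDiffOn _
  · rw [congrFun e p]; exact phaseD_eq_zero_off hK h.2.1 _ hp
  · rw [e]; exact h.2.2.phaseD hU (.inl j)

lemma GlobSym.pdxi (hU : IsOpen U) {K : Set (Phase n)} (hK : IsClosed K) {ℓ : ℝ}
    {a : (Fin n → ℝ) → (Fin n → ℝ) → ℝ} (h : GlobSym U K ℓ a) (j : Fin n) :
    GlobSym U K ℓ (pdxi j a) := by
  have e : (fun p : Phase n => _root_.pdxi j a p.1 p.2) =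
      phaseD (.inr j) (fun p : Phase n => a p.1 p.2) :=
    funext fun p => phaseD_inr_eq_pdxi j (h.1.differentiable (by simp) p)
  refine ⟨?_, fun p hp => ?_, ?_⟩
  · rw [e, ← contDiffOn_univ]
    exact contDiffOn_phaseD isOpen_univ h.1.contDiffOn _
  · rw [congrFun e p]; exact phaseD_eq_zero_off hK h.2.1 _ hp
  · rw [e]; simpa [phaseOrd] using h.2.2.phaseD hU (.inr j)

lemma GlobSym.symClass (hU : IsOpen U) (hξ : ∀ p ∈ U, jap p.2 ≤ 2) {K : Set (Phase n)}
    (hK : IsClosed K) (hKU : K ⊆ U) {ℓ : ℝ} {a : (Fin n → ℝ) → (Fin n → ℝ) → ℝ}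
    (h : GlobSym U K ℓ a) : SymClass 0 ℓ a := by
  have hL : ∀ L, GlobSym U K ℓ (pdxiL L a) := by
    intro L
    induction L with
    | nil => exact h
    | cons j L ih => exact ih.pdxi hU hK j
  have hL' : ∀ L' L, GlobSym U K (ℓ - (L'.length : ℝ)) (pdxL L' (pdxiL L a)) := by
    intro L' L
    induction L' with
    | nil => simpa [pdxL] using hL L
    | cons j L' ih =>
      have := ih.pdx hU hK j
      rw [show ℓ - ((j :: L').length : ℝ) = ℓ - (L'.length : ℝ) - 1 by
        rw [List.length_cons]; push_cast; ring]
      exact this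
  refine ⟨h.1, fun Lx Lξ => ?_⟩
  obtain ⟨-, h0, hs⟩ := hL' Lx Lξ
  obtain ⟨C, hC, hb⟩ := hs.bound
  refine ⟨C * 2 ^ (Lξ.length : ℝ), by positivity, fun x ξ => ?_⟩
  have hx := Real.rpow_nonneg (jap_pos x).le (ℓ - (Lx.length : ℝ))
  by_cases hp : (x, ξ) ∈ U
  · have h1 := hb _ hp
    simp only at h1
    have h2 : (2 : ℝ) ^ (-(Lξ.length : ℝ)) ≤ jap ξ ^ (-(Lξ.length : ℝ)) :=
      Real.rpow_le_rpow_of_nonpos (jap_pos ξ) (hξ _ hp) (by simp)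
    have h3 : (1 : ℝ) ≤ 2 ^ (Lξ.length : ℝ) * jap ξ ^ (-(Lξ.length : ℝ)) := by
      calc (1 : ℝ) = 2 ^ (Lξ.length : ℝ) * 2 ^ (-(Lξ.length : ℝ)) := by
            rw [← Real.rpow_add two_pos]; simp
        _ ≤ _ := by gcongr
    rw [zero_sub]
    calc _ ≤ C * jap x ^ (ℓ - (Lx.length : ℝ)) * 1 := by simpa using h1
      _ ≤ C * jap x ^ (ℓ - (Lx.length : ℝ)) * (2 ^ (Lξ.length : ℝ) * jap ξ ^ (-(Lξ.length : ℝ))) :=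
        by gcongr
      _ = _ := by ring
  · have := h0 (x, ξ) fun hk => hp (hKU hk)
    simp only at this
    rw [this, abs_zero]
    have := Real.rpow_nonneg (jap_pos ξ).le (0 - (Lξ.length : ℝ))
    positivity

/-- Extension by zero of a symbol on `U` vanishing off a closed subset `K` of `U`. -/
lemma globSym_indicator (hU : IsOpen U) {K : Set (Phase n)} (hK : IsClosed K) (hKU : K ⊆ U)
    {ℓ : ℝ} {F : Phase n → ℝ} (hF : SymOn U ℓ F) (h0 : ∀ p ∈ U, p ∉ K → F p = 0) :
    GlobSym U K ℓ (fun x ξ => U.indicator F (x, ξ)) := by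
  have hz : ∀ p ∉ K, U.indicator F p = 0 := by
    intro p hp
    by_cases hpU : p ∈ U
    · rw [Set.indicator_of_mem hpU]; exact h0 p hpU hp
    · exact Set.indicator_of_notMem hpU F
  have heq : Set.EqOn F (U.indicator F) U := fun p hp => (Set.indicator_of_mem hp F).symm
  have hc : ContDiffOn ℝ (⊤ : ℕ∞) (U.indicator F) U := hF.1.congr fun p hp => (heq hp).symm
  refine ⟨?_, hz, hc, fun k => (hF.2 k).congr hU heq⟩
  change ContDiff ℝ (⊤ : ℕ∞) (U.indicator F)
  refine contDiff_iff_contDiffAt.2 fun p => ?_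
  by_cases hp : p ∈ K
  · exact hc.contDiffAt (hU.mem_nhds (hKU hp))
  · have : U.indicator F =ᶠ[𝓝 p] fun _ => 0 :=
      Filter.eventuallyEq_of_mem (hK.isOpen_compl.mem_nhds hp) fun p hp => hz p hp
    exact contDiffAt_const.congr_of_eventuallyEq this

lemma GlobSym.tsupport_subset {K : Set (Phase n)} (hK : IsClosed K) {ℓ : ℝ}
    {a : (Fin n → ℝ) → (Fin n → ℝ) → ℝ} (h : GlobSym U K ℓ a) :
    tsupport (fun p : Phase n => a p.1 p.2) ⊆ K :=
  closure_minimal (fun p hp => by_contra fun hk => hp (h.2.1 p hk)) hK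

/-! ### The basic symbols -/

/-- The squared Euclidean norm. -/
def sqn (x : Fin n → ℝ) : ℝ := ∑ j, x j ^ 2

/-- The open region `|x| > 1`, `||ξ|² - 1| < 4δ`, on which all symbols live. -/
def shell (n : ℕ) (δ : ℝ) : Set (Phase n) := {p | 1 < sqn p.1 ∧ |sqn p.2 - 1| < 4 * δ}

lemma sqn_nonneg (x : Fin n → ℝ) : 0 ≤ sqn x := Finset.sum_nonneg fun _ _ => sq_nonneg _

lemma nrm_sq (x : Fin n → ℝ) : nrm x ^ 2 = sqn x := Real.sq_sqrt (sqn_nonneg x)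

lemma nrm_nonneg (x : Fin n → ℝ) : 0 ≤ nrm x := Real.sqrt_nonneg _

lemma jap_sq (x : Fin n → ℝ) : jap x ^ 2 = 1 + sqn x :=
  Real.sq_sqrt (by have := sqn_nonneg x; unfold sqn at this; linarith)

lemma sq_le_sqn (x : Fin n → ℝ) (j : Fin n) : x j ^ 2 ≤ sqn x :=
  Finset.single_le_sum (f := fun j => x j ^ 2) (fun _ _ => sq_nonneg _) (Finset.mem_univ j)

lemma abs_le_jap (x : Fin n → ℝ) (j : Fin n) : |x j| ≤ jap x := by
  apply abs_le_of_sq_le_sq _ (jap_pos x).le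
  rw [jap_sq]; have := sq_le_sqn x j; linarith

lemma contDiff_sqn : ContDiff ℝ (⊤ : ℕ∞) (sqn : (Fin n → ℝ) → ℝ) := by
  unfold sqn; fun_prop

lemma isOpen_shell (δ : ℝ) : IsOpen (shell n δ) := by
  have h := (contDiff_sqn (n := n)).continuous
  exact (isOpen_lt continuous_const (h.comp continuous_fst)).inter
    (isOpen_lt ((h.comp continuous_snd).sub continuous_const).abs continuous_const)

variable {δ : ℝ}

lemma shell_jap_le (hδ : δ < 1 / 4) : ∀ p ∈ shell n δ, jap p.2 ≤ 2 := by
  intro p hp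
  have h1 := (abs_lt.1 hp.2).2
  apply le_of_sq_le_sq _ two_pos.le
  rw [jap_sq]; linarith

lemma symOn_xi (hδ : δ < 1 / 4) (j : Fin n) : SymOn (shell n δ) 0 (fun p => p.2 j) := by
  refine ⟨by fun_prop, SymN.of_const_deriv
    (c := fun i => (phaseDir i).2 j) ⟨2, fun p hp => ?_⟩ (fun i p => ?_) ?_⟩
  · simpa using (abs_le_jap p.2 j).trans (shell_jap_le hδ p hp)
  · let T : Phase n →L[ℝ] ℝ :=
      (ContinuousLinearMap.proj j).comp (ContinuousLinearMap.snd ℝ (Fin n → ℝ) (Fin n → ℝ))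
    have : (fun p : Phase n => p.2 j) = T := rfl
    rw [phaseD, this, T.fderiv]; rfl
  · rintro (i | i) h
    · simp [phaseDir]
    · simp [phaseOrd] at h

lemma symOn_x (j : Fin n) : SymOn (shell n δ) 1 (fun p => p.1 j) := by
  refine ⟨by fun_prop, SymN.of_const_deriv
    (c := fun i => (phaseDir i).1 j) ⟨1, fun p hp => ?_⟩ (fun i p => ?_) ?_⟩
  · simpa using abs_le_jap p.1 j
  · let T : Phase n →L[ℝ] ℝ :=
      (ContinuousLinearMap.proj j).comp (ContinuousLinearMap.fst ℝ (Fin n → ℝ) (Fin n → ℝ))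
    have : (fun p : Phase n => p.1 j) = T := rfl
    rw [phaseD, this, T.fderiv]; rfl
  · rintro (i | i) h
    · norm_num [phaseOrd] at h
    · norm_num [phaseOrd] at h

lemma hasFDerivAt_sqn (x : Fin n → ℝ) :
    HasFDerivAt sqn (∑ j, (2 * x j) • (ContinuousLinearMap.proj j : (Fin n → ℝ) →L[ℝ] ℝ)) x := by
  unfold sqn
  refine HasFDerivAt.fun_sum fun j _ => ?_
  have : HasFDerivAt (fun x : Fin n → ℝ => x j) (ContinuousLinearMap.proj j) x :=
    (ContinuousLinearMap.proj j : (Fin n → ℝ) →L[ℝ] ℝ).hasFDerivAt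
  simpa using this.pow 2

lemma jap_sq_le_of_mem {p : Phase n} (hp : p ∈ shell n δ) : jap p.1 ^ 2 ≤ 2 * sqn p.1 := by
  rw [jap_sq]; have := hp.1; linarith

lemma sqn_rpow_le (s : ℝ) {p : Phase n} (hp : p ∈ shell n δ) :
    sqn p.1 ^ s ≤ 2 ^ |s| * jap p.1 ^ (2 * s) := by
  have h0 : 0 < sqn p.1 := lt_trans one_pos hp.1
  rw [Real.rpow_mul (jap_pos _).le, Real.rpow_two]
  have h1 := jap_sq_le_of_mem hp
  have h2 : sqn p.1 ≤ jap p.1 ^ 2 := by rw [jap_sq]; linarith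
  rcases le_total 0 s with hs | hs
  · have h3 := Real.rpow_le_rpow h0.le h2 hs
    have h4 : (1 : ℝ) ≤ 2 ^ |s| := Real.one_le_rpow (by norm_num) (abs_nonneg s)
    have : 0 ≤ (jap p.1 ^ 2) ^ s := by positivity
    nlinarith
  · have h3 : (2 * sqn p.1) ^ s ≤ (jap p.1 ^ 2) ^ s :=
      Real.rpow_le_rpow_of_nonpos (by have := jap_pos p.1; positivity) h1 hs
    rw [Real.mul_rpow two_pos.le h0.le] at h3
    rw [abs_of_nonpos hs]
    calc sqn p.1 ^ s = 2 ^ (-s) * (2 ^ s * sqn p.1 ^ s) := by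
          rw [← mul_assoc, ← Real.rpow_add two_pos]; simp
      _ ≤ _ := by gcongr

lemma symOn_sqn_rpow (s : ℝ) : SymOn (shell n δ) (2 * s) (fun p => sqn p.1 ^ s) := by
  have hc : ∀ s : ℝ, ContDiffOn ℝ (⊤ : ℕ∞) (fun p : Phase n => sqn p.1 ^ s) (shell n δ) := by
    intro s p hp
    have h0 : sqn p.1 ≠ 0 := (lt_trans one_pos hp.1).ne'
    have h1 : ContDiff ℝ (⊤ : ℕ∞) (fun p : Phase n => sqn p.1) := contDiff_sqn.comp contDiff_fst
    exact (h1.contDiffAt.rpow_const_of_ne h0).contDiffWithinAt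
  refine ⟨hc s, fun k => ?_⟩
  have hb : ∀ s : ℝ, ∃ C, ∀ p ∈ shell n δ, |sqn p.1 ^ s| ≤ C * jap p.1 ^ (2 * s) := fun s =>
    ⟨2 ^ |s|, fun p hp => by
      rw [abs_of_nonneg (Real.rpow_nonneg (sqn_nonneg _) _)]; exact sqn_rpow_le s hp⟩
  induction k generalizing s with
  | zero => exact hb s
  | succ k ih =>
    refine ⟨hb s, fun i => ?_⟩
    have hd : ∀ p ∈ shell n δ, phaseD i (fun p : Phase n => sqn p.1 ^ s) p =
        (∑ j, (2 * p.1 j) * (phaseDir i).1 j) * (s * sqn p.1 ^ (s - 1)) := by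
      intro p hp
      have h0 : sqn p.1 ≠ 0 := (lt_trans one_pos hp.1).ne'
      have h1 : HasFDerivAt (fun p : Phase n => sqn p.1) _ p :=
        HasFDerivAt.comp (g := sqn) (f := Prod.fst) p (hasFDerivAt_sqn p.1) hasFDerivAt_fst
      rw [phaseD, (h1.rpow_const (p := s) (Or.inl h0)).fderiv]
      simp
      ring
    rcases i with i | i
    · have h1 := (((symOn_x (δ := δ) i).const_mul (isOpen_shell δ) 2).2 k).mul (isOpen_shell δ)
        (by fun_prop) (contDiffOn_const.mul (hc (s - 1)))
        (((symN_const s k).mul (isOpen_shell δ) contDiffOn_const (hc (s - 1)) (ih (s - 1))))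
      have e : (1 : ℝ) + (0 + 2 * (s - 1)) = 2 * s - phaseOrd (.inl i : Fin n ⊕ Fin n) := by
        simp only [phaseOrd]; ring
      rw [e] at h1
      refine h1.congr (isOpen_shell δ) fun p hp => ?_
      rw [hd p hp]
      simp [phaseDir, Pi.single_apply]
    · refine (symN_zero k _).congr (isOpen_shell δ) fun p hp => ?_
      rw [hd p hp]
      simp [phaseDir]


/-! ### The velocity, the angle and the escape function -/

variable {g₀ : Fin n → Fin n → ℝ}

lemma isCompact_annulus (hδ : δ < 1 / 4) :
    IsCompact {ξ : Fin n → ℝ | |sqn ξ - 1| ≤ 4 * δ} := by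
  refine (isCompact_closedBall (0 : Fin n → ℝ) 2).of_isClosed_subset
    (isClosed_le (contDiff_sqn.continuous.sub continuous_const).abs continuous_const) ?_
  intro ξ hξ
  rw [mem_closedBall_zero_iff, pi_norm_le_iff_of_nonneg two_pos.le]
  intro j
  rw [Real.norm_eq_abs]
  apply abs_le_of_sq_le_sq _ two_pos.le
  have h1 := (abs_le.1 (show |sqn ξ - 1| ≤ 4 * δ from hξ)).2
  have := sq_le_sqn ξ j
  linarith

lemma continuous_sqn_vv : Continuous fun ξ : Fin n → ℝ => sqn (vv g₀ ξ) := by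
  unfold sqn vv; fun_prop

lemma sqn_vv_pos (hnd : ∀ ξ : Fin n → ℝ, (∀ j, ∑ k, g₀ j k * ξ k = 0) → ξ = 0)
    {ξ : Fin n → ℝ} (hξ : ξ ≠ 0) : 0 < sqn (vv g₀ ξ) := by
  refine lt_of_le_of_ne (sqn_nonneg _) fun h => hξ (hnd ξ fun j => ?_)
  have h1 := sq_le_sqn (vv g₀ ξ) j
  rw [← h] at h1
  have h2 : vv g₀ ξ j = 0 := pow_eq_zero_iff two_ne_zero |>.1 (le_antisymm h1 (sq_nonneg _))
  simpa [vv] using h2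

lemma sqn_vv_pos_annulus (hnd : ∀ ξ : Fin n → ℝ, (∀ j, ∑ k, g₀ j k * ξ k = 0) → ξ = 0)
    (hδ : δ < 1 / 4) {ξ : Fin n → ℝ} (hξ : |sqn ξ - 1| ≤ 4 * δ) : 0 < sqn (vv g₀ ξ) := by
  refine sqn_vv_pos hnd ?_
  rintro rfl
  have := (abs_le.1 hξ).1
  simp [sqn] at this
  linarith

/-- The speed `|v(ξ)|` is bounded below on the annulus, by nondegeneracy and compactness. -/
lemma exists_nrm_vv_ge (hnd : ∀ ξ : Fin n → ℝ, (∀ j, ∑ k, g₀ j k * ξ k = 0) → ξ = 0)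
    (hδ : δ < 1 / 4) : ∃ w > 0, ∀ p ∈ shell n δ, w ≤ nrm (vv g₀ p.2) := by
  obtain ⟨c, hc, h⟩ := (isCompact_annulus (n := n) hδ).exists_forall_le'
    (f := fun ξ => sqn (vv g₀ ξ)) continuous_sqn_vv.continuousOn
    (fun ξ hξ => sqn_vv_pos_annulus hnd hδ hξ)
  exact ⟨Real.sqrt c, Real.sqrt_pos.2 hc, fun p hp => Real.sqrt_le_sqrt (h p.2 hp.2.le)⟩

lemma nrm_inv (x : Fin n → ℝ) : (nrm x)⁻¹ = sqn x ^ (-1 / 2 : ℝ) := by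
  rw [neg_div, Real.rpow_neg (sqn_nonneg x), ← Real.sqrt_eq_rpow]; rfl

lemma betaF_eq (x ξ : Fin n → ℝ) : betaF g₀ x ξ =
    sqn x ^ (-1 / 2 : ℝ) * (sqn (vv g₀ ξ) ^ (-1 / 2 : ℝ) * ∑ j, x j * vv g₀ ξ j) := by
  simp only [betaF, dotp, vhat, Pi.smul_apply, smul_eq_mul, ← nrm_inv, Finset.mul_sum]
  exact Finset.sum_congr rfl fun j _ => by ring

lemma abs_betaF_le (x ξ : Fin n → ℝ) : |betaF g₀ x ξ| ≤ 1 := by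
  have hcs : (∑ j, x j * vv g₀ ξ j) ^ 2 ≤ sqn x * sqn (vv g₀ ξ) :=
    Finset.sum_mul_sq_le_sq_mul_sq _ _ _
  rw [betaF_eq, ← nrm_inv, ← nrm_inv]
  set S := ∑ j, x j * vv g₀ ξ j
  have h1 : |S| ≤ nrm x * nrm (vv g₀ ξ) := by
    apply abs_le_of_sq_le_sq _ (mul_nonneg (nrm_nonneg _) (nrm_nonneg _))
    rw [mul_pow, nrm_sq, nrm_sq]; exact hcs
  rw [abs_mul, abs_mul, abs_of_nonneg (inv_nonneg.2 (nrm_nonneg _)),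
    abs_of_nonneg (inv_nonneg.2 (nrm_nonneg _))]
  calc _ ≤ (nrm x)⁻¹ * ((nrm (vv g₀ ξ))⁻¹ * (nrm x * nrm (vv g₀ ξ))) := by
        have := nrm_nonneg x
        have := nrm_nonneg (vv g₀ ξ)
        gcongr
    _ = ((nrm x)⁻¹ * nrm x) * ((nrm (vv g₀ ξ))⁻¹ * nrm (vv g₀ ξ)) := by ring
    _ ≤ 1 * 1 := mul_le_mul (inv_mul_le_one) (inv_mul_le_one)
        (mul_nonneg (inv_nonneg.2 (nrm_nonneg _)) (nrm_nonneg _)) zero_le_one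
    _ = 1 := one_mul 1

lemma symOn_vv (hδ : δ < 1 / 4) (j : Fin n) : SymOn (shell n δ) 0 (fun p => vv g₀ p.2 j) :=
  (SymOn.sum (isOpen_shell δ) _ fun k =>
    (symOn_xi hδ k).const_mul (isOpen_shell δ) (g₀ j k)).const_mul (isOpen_shell δ) 2

lemma symOn_sqn_vv (hδ : δ < 1 / 4) : SymOn (shell n δ) 0 (fun p => sqn (vv g₀ p.2)) := by
  have : SymOn (shell n δ) 0 (fun p => ∑ j, vv g₀ p.2 j * vv g₀ p.2 j) :=
    SymOn.sum (isOpen_shell δ) _ fun j =>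
      (symOn_vv hδ j).mul0 (isOpen_shell δ) (symOn_vv hδ j)
  simpa only [sqn, sq] using this

lemma symOn_betaF (hnd : ∀ ξ : Fin n → ℝ, (∀ j, ∑ k, g₀ j k * ξ k = 0) → ξ = 0)
    (hδ : δ < 1 / 4) : SymOn (shell n δ) 0 (fun p => betaF g₀ p.1 p.2) := by
  have hO := isOpen_shell (n := n) δ
  have h1 : SymOn (shell n δ) 0 (fun p => sqn (vv g₀ p.2) ^ (-1 / 2 : ℝ)) := by
    refine (symOn_sqn_vv hδ).comp hO (φ := fun t => t ^ (-1 / 2 : ℝ)) isOpen_Ioi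
      ((isCompact_annulus (n := n) hδ).image (continuous_sqn_vv (g₀ := g₀))) (V := Set.Ioi 0)
      ?_ (fun p hp => ⟨p.2, hp.2.le, rfl⟩) ?_
    · rintro _ ⟨ξ, hξ, rfl⟩
      exact sqn_vv_pos_annulus hnd hδ hξ
    · intro t ht
      exact (contDiffAt_id.rpow_const_of_ne (ne_of_gt ht)).contDiffWithinAt
  have h2 : SymOn (shell n δ) (1 + 0) (fun p => ∑ j, p.1 j * vv g₀ p.2 j) :=
    SymOn.sum hO _ fun j => (symOn_x j).mul hO (symOn_vv hδ j)
  have h3 := (symOn_sqn_rpow (n := n) (δ := δ) (-1 / 2)).mul hO (h1.mul hO h2)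
  simp only [betaF_eq]
  convert h3 using 1
  norm_num

/-- The escape function `m = |x|^{-ν}(2 - β)`: positive, small for large `|x|`, and strictly
decreasing along the free flow as long as `β` stays away from `-1`. -/
def escF (g₀ : Fin n → Fin n → ℝ) (ν : ℝ) (p : Phase n) : ℝ :=
  sqn p.1 ^ (-ν / 2) * (2 - betaF g₀ p.1 p.2)

/-- The energy deviation `(|ξ|² - 1)²`, lowered by the escape function. -/
def enF (g₀ : Fin n → Fin n → ℝ) (ν : ℝ) (p : Phase n) : ℝ :=
  (sqn p.2 - 1) ^ 2 - escF g₀ ν p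

lemma symOn_escF (hnd : ∀ ξ : Fin n → ℝ, (∀ j, ∑ k, g₀ j k * ξ k = 0) → ξ = 0)
    (hδ : δ < 1 / 4) (ν : ℝ) : SymOn (shell n δ) (-ν) (escF g₀ ν) := by
  have hO := isOpen_shell (n := n) δ
  have := (symOn_sqn_rpow (n := n) (δ := δ) (-ν / 2)).mul hO
    ((SymOn.const 2).sub hO (symOn_betaF hnd hδ))
  rwa [show 2 * (-ν / 2) + 0 = -ν by ring] at this

lemma symOn_energy (hδ : δ < 1 / 4) : SymOn (shell n δ) 0 (fun p => (sqn p.2 - 1) ^ 2) := by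
  have hO := isOpen_shell (n := n) δ
  have h1 : SymOn (shell n δ) 0 (fun p => ∑ j, p.2 j * p.2 j) :=
    SymOn.sum hO _ fun j => (symOn_xi hδ j).mul0 hO (symOn_xi hδ j)
  have h2 := h1.sub hO (SymOn.const 1)
  simpa only [sqn, sq] using h2.mul0 hO h2

lemma symOn_enF (hnd : ∀ ξ : Fin n → ℝ, (∀ j, ∑ k, g₀ j k * ξ k = 0) → ξ = 0)
    (hδ : δ < 1 / 4) {ν : ℝ} (hν : 0 ≤ ν) : SymOn (shell n δ) 0 (enF g₀ ν) :=
  (symOn_energy hδ).sub (isOpen_shell δ) ((symOn_escF hnd hδ ν).mono (by linarith))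

lemma SymOn.differentiableAt (hU : IsOpen U) {ℓ : ℝ} {a : Phase n → ℝ} (h : SymOn U ℓ a)
    {p : Phase n} (hp : p ∈ U) : DifferentiableAt ℝ a p :=
  (h.1.contDiffAt (hU.mem_nhds hp)).differentiableAt (by simp)

/-- The derivative of the escape function along the free flow `ẋ = v(ξ)`. -/
lemma fderiv_escF (hnd : ∀ ξ : Fin n → ℝ, (∀ j, ∑ k, g₀ j k * ξ k = 0) → ξ = 0)
    (hδ : δ < 1 / 4) (ν : ℝ) {p : Phase n} (hp : p ∈ shell n δ) :
    fderiv ℝ (escF g₀ ν) p (vv g₀ p.2, 0) = -(nrm (vv g₀ p.2) * sqn p.1 ^ (-(ν + 1) / 2) *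
      (ν * betaF g₀ p.1 p.2 * (2 - betaF g₀ p.1 p.2) + (1 - betaF g₀ p.1 p.2 ^ 2))) := by
  obtain ⟨x, ξ⟩ := p
  have hd := (symOn_escF hnd hδ ν).differentiableAt (isOpen_shell δ) hp
  have hx : 0 < sqn x := lt_trans one_pos hp.1
  have hV : 0 < sqn (vv g₀ ξ) := sqn_vv_pos_annulus hnd hδ hp.2.le
  set v := vv g₀ ξ with hv
  have hl : HasDerivAt (fun t : ℝ => x + t • v) v 0 := by
    simpa using ((hasDerivAt_id (0 : ℝ)).smul_const v).const_add x
  have hline : HasDerivAt (fun t : ℝ => ((x + t • v, ξ) : Phase n)) (v, 0) 0 :=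
    hl.prodMk (hasDerivAt_const 0 ξ)
  have e0 : ((x + (0 : ℝ) • v, ξ) : Phase n) = (x, ξ) := by simp
  have h1 : HasDerivAt (fun t : ℝ => escF g₀ ν (x + t • v, ξ))
      (fderiv ℝ (escF g₀ ν) (x, ξ) (v, 0)) 0 := by
    have hd' : HasFDerivAt (escF g₀ ν) (fderiv ℝ (escF g₀ ν) (x, ξ)) (x + (0 : ℝ) • v, ξ) := by
      rw [e0]; exact hd.hasFDerivAt
    exact hd'.comp_hasDerivAt (0 : ℝ) hline
  have hQ : HasDerivAt (fun t : ℝ => sqn (x + t • v)) (2 * ∑ j, x j * v j) 0 := by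
    have := (hasFDerivAt_sqn (x + (0 : ℝ) • v)).comp_hasDerivAt (0 : ℝ) hl
    refine this.congr_deriv ?_
    simp [Finset.mul_sum, mul_assoc]
  have hS : HasDerivAt (fun t : ℝ => ∑ j, (x + t • v) j * v j) (sqn v) 0 := by
    have : HasDerivAt (fun t : ℝ => ∑ j, (x + t • v) j * v j) (∑ j, v j * v j) 0 :=
      HasDerivAt.fun_sum fun j _ => ((hasDerivAt_pi.1 hl) j).mul_const (v j)
    simpa only [sqn, sq] using this
  have hQ0 : sqn (x + (0 : ℝ) • v) ≠ 0 := by simpa using hx.ne'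
  have h2 := (hQ.rpow_const (p := -ν / 2) (Or.inl hQ0)).mul
    (((hQ.rpow_const (p := -1 / 2) (Or.inl hQ0)).mul
      (hS.const_mul (sqn v ^ (-1 / 2 : ℝ)))).const_sub 2)
  have h3 := h2.congr_of_eventuallyEq (f₁ := fun t : ℝ => escF g₀ ν (x + t • v, ξ))
    (Filter.Eventually.of_forall fun t => by simp only [escF, betaF_eq, Pi.mul_apply, hv])
  rw [h1.unique h3]
  simp only [zero_smul, add_zero, betaF_eq, Pi.mul_apply]
  rw [← hv]
  set S := ∑ j, x j * v j
  -- all powers of `|x|²` and `|v|²` are expressed through `|x|^{-ν}`, `|x|^{-1}` and `|v|`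
  have ha : sqn x ^ (-1 / 2 : ℝ) = (nrm x)⁻¹ := (nrm_inv x).symm
  have hnx : 0 < nrm x := Real.sqrt_pos.2 hx
  have hnv : 0 < nrm v := Real.sqrt_pos.2 hV
  have hx1 : sqn x ^ (-1 : ℝ) = (nrm x)⁻¹ ^ 2 := by
    rw [Real.rpow_neg_one, ← nrm_sq, inv_pow]
  have e1 : sqn x ^ (-ν / 2 - 1) = sqn x ^ (-ν / 2) * (nrm x)⁻¹ ^ 2 := by
    rw [← hx1, ← Real.rpow_add hx]; rfl
  have e2 : sqn x ^ (-1 / 2 - 1 : ℝ) = (nrm x)⁻¹ * (nrm x)⁻¹ ^ 2 := by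
    rw [← hx1, ← ha, ← Real.rpow_add hx]; rfl
  have e3 : sqn x ^ (-(ν + 1) / 2) = sqn x ^ (-ν / 2) * (nrm x)⁻¹ := by
    rw [← ha, ← Real.rpow_add hx]; congr 1; ring
  rw [e1, e2, e3, ha, ← nrm_inv, ← nrm_sq v]
  field_simp
  ring

/-- The free flow strictly decreases the escape function where `β ≥ σ > -1`. -/
lemma escape_rate_ge {ν σ b : ℝ} (hν : 0 < ν) (hνσ : 6 * ν ≤ 1 - σ ^ 2) (hσ : σ < 0)
    (hb : |b| ≤ 1) (hσb : σ ≤ b) : ν ≤ ν * b * (2 - b) + (1 - b ^ 2) := by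
  obtain ⟨h1, h2⟩ := abs_le.1 hb
  rcases le_total 0 b with h | h
  · have : ν ≤ 1 := by nlinarith
    nlinarith [mul_nonneg hν.le (mul_nonneg h (sub_nonneg.2 h2)),
      mul_nonneg (sub_nonneg.2 this) (mul_nonneg (sub_nonneg.2 h2) (by linarith : 0 ≤ 1 + b))]
  · have h3 : b ^ 2 ≤ σ ^ 2 := by nlinarith
    have h4 : -3 ≤ b * (2 - b) := by nlinarith
    nlinarith


/-! ### The Hamilton vector field of `p₂` and the monotonicity estimate -/

variable {g : Fin n → Fin n → (Fin n → ℝ) → ℝ} {μ : ℝ}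

lemma pdxi_p2 (hg : AssumpG g g₀ μ) (j : Fin n) (x ξ : Fin n → ℝ) :
    pdxi j (p2 g) x ξ = 2 * ∑ k, g j k x * ξ k := by
  have hproj : ∀ j : Fin n, HasFDerivAt (fun ζ : Fin n → ℝ => ζ j)
      (ContinuousLinearMap.proj j : (Fin n → ℝ) →L[ℝ] ℝ) ξ := fun j =>
    (ContinuousLinearMap.proj j : (Fin n → ℝ) →L[ℝ] ℝ).hasFDerivAt
  have h : HasFDerivAt (fun ζ => p2 g x ζ) _ ξ :=
    HasFDerivAt.fun_sum fun i (_ : i ∈ Finset.univ) =>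
      HasFDerivAt.fun_sum fun k (_ : k ∈ Finset.univ) =>
        ((hproj i).const_mul (g i k x)).mul (hproj k)
  rw [pdxi, h.fderiv]
  simp only [sum_apply, add_apply, smul_apply, ContinuousLinearMap.proj_apply,
    smul_eq_mul, Pi.single_apply, Finset.sum_add_distrib]
  simp only [mul_ite, mul_one, mul_zero, Finset.sum_ite_eq', Finset.mem_univ, if_true]
  rw [Finset.sum_comm (f := fun i k => if i = j then ξ k * g i k x else 0)]
  simp only [Finset.sum_ite_eq', Finset.mem_univ, if_true]
  rw [two_mul]
  congr 1
  · exact Finset.sum_congr rfl fun k _ => by rw [hg.symm k j]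
  · exact Finset.sum_congr rfl fun k _ => mul_comm _ _

lemma pdx_p2 (hg : AssumpG g g₀ μ) (j : Fin n) (x ξ : Fin n → ℝ) :
    pdx j (p2 g) x ξ = ∑ i, ∑ k, pd j (fun y => g i k y - g₀ i k) x * ξ i * ξ k := by
  have h : HasFDerivAt (fun y => p2 g y ξ) _ x :=
    HasFDerivAt.fun_sum fun i (_ : i ∈ Finset.univ) =>
      HasFDerivAt.fun_sum fun k (_ : k ∈ Finset.univ) =>
        ((((hg.smooth i k).differentiable (by simp) x).hasFDerivAt).mul_const (ξ i)).mul_const (ξ k)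
  rw [pdx, h.fderiv]
  simp only [sum_apply, smul_apply, smul_eq_mul, pd, fderiv_sub_const]
  exact Finset.sum_congr rfl fun i _ => Finset.sum_congr rfl fun k _ => by ring

lemma abs_xi_le (hδ : δ < 1 / 4) {p : Phase n} (hp : p ∈ shell n δ) (j : Fin n) : |p.2 j| ≤ 2 :=
  (abs_le_jap p.2 j).trans (shell_jap_le hδ p hp)

/-- On the shell, `∂_ξ p₂ = v(ξ) + O(⟨x⟩^{-μ})` and `∂_x p₂ = O(⟨x⟩^{-1-μ})`. -/
lemma p2_bounds (hg : AssumpG g g₀ μ) (hδ : δ < 1 / 4) :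
    ∃ C > 0, ∀ p ∈ shell n δ, ∀ j,
      |pdxi j (p2 g) p.1 p.2 - vv g₀ p.2 j| ≤ C * jap p.1 ^ (-μ) ∧
      |pdx j (p2 g) p.1 p.2| ≤ C * jap p.1 ^ (-μ - 1) := by
  obtain ⟨A, hA, h0⟩ := hg.decay []
  have h1 : ∀ j : Fin n, ∃ B > 0, ∀ i k x,
      |pd j (fun y => g i k y - g₀ i k) x| ≤ B * jap x ^ (-μ - 1) := by
    intro j
    obtain ⟨B, hB, h⟩ := hg.decay [j]
    exact ⟨B, hB, fun i k x => by simpa [pdL] using h i k x⟩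
  choose B hB h1 using h1
  have hBs : ∀ j, B j ≤ ∑ j, B j := fun j =>
    Finset.single_le_sum (fun j _ => (hB j).le) (Finset.mem_univ j)
  have hBn : 0 ≤ ∑ j, B j := Finset.sum_nonneg fun j _ => (hB j).le
  refine ⟨4 * n * A + 4 * n * n * (∑ j, B j) + 1, by positivity, fun p hp j => ⟨?_, ?_⟩⟩
  · have hj := Real.rpow_nonneg (jap_pos p.1).le (-μ)
    have e : pdxi j (p2 g) p.1 p.2 - vv g₀ p.2 j = 2 * ∑ k, (g j k p.1 - g₀ j k) * p.2 k := by
      rw [pdxi_p2 hg, vv, ← mul_sub, ← Finset.sum_sub_distrib]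
      simp only [sub_mul]
    rw [e, abs_mul, abs_two]
    have h2 : |∑ k, (g j k p.1 - g₀ j k) * p.2 k| ≤ ∑ k : Fin n, A * jap p.1 ^ (-μ) * 2 := by
      refine (Finset.abs_sum_le_sum_abs _ _).trans (Finset.sum_le_sum fun k _ => ?_)
      rw [abs_mul]
      have h3 := h0 j k p.1
      simp only [pdL, List.length_nil, Nat.cast_zero, sub_zero] at h3
      exact mul_le_mul h3 (abs_xi_le hδ hp k) (abs_nonneg _) (by positivity)
    simp only [Finset.sum_const, Finset.card_univ, Fintype.card_fin, nsmul_eq_mul] at h2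
    have h4 : 0 ≤ (4 * n * n * (∑ j, B j) + 1) * jap p.1 ^ (-μ) := by positivity
    nlinarith
  · have hj := Real.rpow_nonneg (jap_pos p.1).le (-μ - 1)
    rw [pdx_p2 hg]
    have h2 : |∑ i, ∑ k, pd j (fun y => g i k y - g₀ i k) p.1 * p.2 i * p.2 k| ≤
        ∑ i : Fin n, ∑ k : Fin n, (∑ j, B j) * jap p.1 ^ (-μ - 1) * 2 * 2 := by
      refine (Finset.abs_sum_le_sum_abs _ _).trans (Finset.sum_le_sum fun i _ => ?_)
      refine (Finset.abs_sum_le_sum_abs _ _).trans (Finset.sum_le_sum fun k _ => ?_)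
      rw [abs_mul, abs_mul]
      have h3 : |pd j (fun y => g i k y - g₀ i k) p.1| ≤ (∑ j, B j) * jap p.1 ^ (-μ - 1) :=
        (h1 j i k p.1).trans (mul_le_mul_of_nonneg_right (hBs j) hj)
      exact mul_le_mul (mul_le_mul h3 (abs_xi_le hδ hp i) (abs_nonneg _) (by positivity))
        (abs_xi_le hδ hp k) (abs_nonneg _) (by positivity)
    simp only [Finset.sum_const, Finset.card_univ, Fintype.card_fin, nsmul_eq_mul] at h2
    have h4 : 0 ≤ (4 * n * A + 1) * jap p.1 ^ (-μ - 1) := by positivity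
    nlinarith

/-- The derivative of `a` along the Hamilton vector field of `p₂`. -/
def hamD (g : Fin n → Fin n → (Fin n → ℝ) → ℝ) (a : Phase n → ℝ) (p : Phase n) : ℝ :=
  ∑ j, (pdxi j (p2 g) p.1 p.2 * phaseD (.inl j) a p - pdx j (p2 g) p.1 p.2 * phaseD (.inr j) a p)

lemma fderiv_fst_eq_sum (a : Phase n → ℝ) (p : Phase n) (v : Fin n → ℝ) :
    fderiv ℝ a p (v, 0) = ∑ j, v j * phaseD (.inl j) a p := by
  have : ((v, 0) : Phase n) = ∑ j, v j • phaseDir (.inl j) := by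
    ext k
    · simp [phaseDir, Prod.fst_sum, Finset.sum_apply, Pi.single_apply]
    · simp [phaseDir, Prod.snd_sum, Finset.sum_apply]
  rw [this, map_sum]
  simp [phaseD]

lemma nrm_le_jap (x : Fin n → ℝ) : nrm x ≤ jap x :=
  Real.sqrt_le_sqrt (by linarith)

/-- Far out in `β ≥ σ`, the lowered energy deviation is nondecreasing along the Hamilton flow:
the escape function moves at the rate `|x|^{-1-ν}`, while `ξ` moves only at the faster decaying
rate `|x|^{-1-μ}`. -/
lemma hamD_enF_nonneg (hg : AssumpG g g₀ μ) (hδ : δ < 1 / 4) {ν σ : ℝ} (hν : 0 < ν) (hνμ : ν < μ)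
    (hνσ : 6 * ν ≤ 1 - σ ^ 2) (hσ : σ < 0) :
    ∃ R₁, ∀ p ∈ shell n δ, R₁ ≤ nrm p.1 → σ ≤ betaF g₀ p.1 p.2 → 0 ≤ hamD g (enF g₀ ν) p := by
  have hO := isOpen_shell (n := n) δ
  obtain ⟨w, hw, hwb⟩ := exists_nrm_vv_ge hg.nondeg0 hδ
  obtain ⟨C, hC, hCb⟩ := p2_bounds hg hδ
  have hm : ∀ j, ∃ A > 0, ∀ p ∈ shell n δ,
      |phaseD (.inl j) (escF g₀ ν) p| ≤ A * jap p.1 ^ (-ν - 1) := fun j =>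
    ((symOn_escF hg.nondeg0 hδ ν).phaseD hO (.inl j)).bound
  have hs : ∀ j, ∃ B > 0, ∀ p ∈ shell n δ, |phaseD (.inr j) (enF g₀ ν) p| ≤ B := fun j => by
    obtain ⟨B, hB, h⟩ := ((symOn_enF hg.nondeg0 hδ hν.le).phaseD hO (.inr j)).bound
    exact ⟨B, hB, fun p hp => by simpa [phaseOrd] using h p hp⟩
  choose A hA hm using hm
  choose B hB hs using hs
  set D : ℝ := ∑ j, C * (A j + B j) with hD
  have hD0 : 0 ≤ D := Finset.sum_nonneg fun j _ => by have := hA j; have := hB j; positivity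
  have hlim := (tendsto_rpow_neg_atTop (sub_pos.2 hνμ)).eventually
    (Iic_mem_nhds (show (0 : ℝ) < w * ν / (D + 1) by positivity))
  obtain ⟨R₁, hR₁⟩ := Filter.eventually_atTop.1 hlim
  refine ⟨R₁, fun p hp hR hσβ => ?_⟩
  have hjap := hR₁ (jap p.1) (hR.trans (nrm_le_jap p.1))
  have hjap' : jap p.1 ^ (-(μ - ν)) * D ≤ w * ν := by
    have h1 : jap p.1 ^ (-(μ - ν)) ≤ w * ν / (D + 1) := hjap
    rw [le_div_iff₀ (by positivity)] at h1
    have := Real.rpow_nonneg (jap_pos p.1).le (-(μ - ν))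
    nlinarith
  have hx : ∀ j, phaseD (.inl j) (enF g₀ ν) p = -phaseD (.inl j) (escF g₀ ν) p := by
    intro j
    have hd1 := (symOn_energy hδ).differentiableAt hO hp
    have hd2 := (symOn_escF hg.nondeg0 hδ ν).differentiableAt hO hp
    have h0 : fderiv ℝ (fun p : Phase n => (sqn p.2 - 1) ^ 2) p (phaseDir (.inl j)) = 0 := by
      have hd : HasFDerivAt (fun ξ : Fin n → ℝ => (sqn ξ - 1) ^ 2)
          (fderiv ℝ (fun ξ : Fin n → ℝ => (sqn ξ - 1) ^ 2) p.2) p.2 := by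
        refine DifferentiableAt.hasFDerivAt ?_
        exact (((hasFDerivAt_sqn p.2).differentiableAt).sub_const 1).pow 2
      have := HasFDerivAt.comp (f := Prod.snd) p hd hasFDerivAt_snd
      have h2 := this.fderiv
      simp only [Function.comp_def] at h2
      rw [h2]
      simp [phaseDir]
    rw [phaseD, show enF g₀ ν = fun p => (sqn p.2 - 1) ^ 2 - escF g₀ ν p from rfl,
      fderiv_fun_sub hd1 hd2, sub_apply, h0, zero_sub, phaseD]
  have hsplit : hamD g (enF g₀ ν) p = -fderiv ℝ (escF g₀ ν) p (vv g₀ p.2, 0) -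
      ∑ j, ((pdxi j (p2 g) p.1 p.2 - vv g₀ p.2 j) * phaseD (.inl j) (escF g₀ ν) p
        + pdx j (p2 g) p.1 p.2 * phaseD (.inr j) (enF g₀ ν) p) := by
    rw [fderiv_fst_eq_sum, ← Finset.sum_neg_distrib, ← Finset.sum_sub_distrib, hamD]
    refine Finset.sum_congr rfl fun j _ => ?_
    rw [hx]; ring
  have herr : |∑ j, ((pdxi j (p2 g) p.1 p.2 - vv g₀ p.2 j) * phaseD (.inl j) (escF g₀ ν) p
        + pdx j (p2 g) p.1 p.2 * phaseD (.inr j) (enF g₀ ν) p)| ≤ D * jap p.1 ^ (-μ - 1) := by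
    rw [hD, Finset.sum_mul]
    refine (Finset.abs_sum_le_sum_abs _ _).trans (Finset.sum_le_sum fun j _ => ?_)
    obtain ⟨h1, h2⟩ := hCb p hp j
    have hj1 := Real.rpow_nonneg (jap_pos p.1).le (-μ)
    have hj2 := Real.rpow_nonneg (jap_pos p.1).le (-μ - 1)
    have h3 : jap p.1 ^ (-μ) * jap p.1 ^ (-ν - 1) ≤ jap p.1 ^ (-μ - 1) := by
      rw [← Real.rpow_add (jap_pos _)]
      exact Real.rpow_le_rpow_of_exponent_le (one_le_jap _) (by linarith)
    have hAj := (hA j).le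
    have hBj := (hB j).le
    calc _ ≤ |pdxi j (p2 g) p.1 p.2 - vv g₀ p.2 j| * |phaseD (.inl j) (escF g₀ ν) p|
          + |pdx j (p2 g) p.1 p.2| * |phaseD (.inr j) (enF g₀ ν) p| := by
          rw [← abs_mul, ← abs_mul]; exact abs_add_le _ _
      _ ≤ (C * jap p.1 ^ (-μ)) * (A j * jap p.1 ^ (-ν - 1)) + (C * jap p.1 ^ (-μ - 1)) * B j :=
          add_le_add (mul_le_mul h1 (hm j p hp) (abs_nonneg _) (by positivity))
            (mul_le_mul h2 (hs j p hp) (abs_nonneg _) (by positivity))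
      _ = C * A j * (jap p.1 ^ (-μ) * jap p.1 ^ (-ν - 1)) + C * B j * jap p.1 ^ (-μ - 1) := by ring
      _ ≤ C * A j * jap p.1 ^ (-μ - 1) + C * B j * jap p.1 ^ (-μ - 1) := by gcongr
      _ = _ := by ring
  have hmain : w * ν * jap p.1 ^ (-ν - 1) ≤ -fderiv ℝ (escF g₀ ν) p (vv g₀ p.2, 0) := by
    rw [fderiv_escF hg.nondeg0 hδ ν hp, neg_neg]
    have hq : jap p.1 ^ (-ν - 1) ≤ sqn p.1 ^ (-(ν + 1) / 2) := by
      have h0 : 0 < sqn p.1 := lt_trans one_pos hp.1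
      rw [show -ν - 1 = 2 * (-(ν + 1) / 2) by ring, Real.rpow_mul (jap_pos _).le, Real.rpow_two]
      exact Real.rpow_le_rpow_of_nonpos h0 (by rw [jap_sq]; linarith) (by linarith)
    have hr := escape_rate_ge hν hνσ hσ (abs_betaF_le (g₀ := g₀) p.1 p.2) hσβ
    have hj := Real.rpow_nonneg (jap_pos p.1).le (-ν - 1)
    calc w * ν * jap p.1 ^ (-ν - 1) = w * jap p.1 ^ (-ν - 1) * ν := by ring
      _ ≤ _ := mul_le_mul (mul_le_mul (hwb p hp) hq hj (nrm_nonneg _)) hr hν.le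
          (mul_nonneg (nrm_nonneg _) (hj.trans hq))
  have hfin : D * jap p.1 ^ (-μ - 1) ≤ w * ν * jap p.1 ^ (-ν - 1) := by
    rw [show -μ - 1 = -(μ - ν) + (-ν - 1) by ring, Real.rpow_add (jap_pos _)]
    have hj := Real.rpow_nonneg (jap_pos p.1).le (-ν - 1)
    nlinarith
  rw [hsplit]
  have := (abs_le.1 herr).2
  linarith

/-! ### Cut-off functions -/

/-- A smooth nondecreasing step: `0` for `t ≤ a`, `1` for `t ≥ b`. -/
def stp (a b t : ℝ) : ℝ := Real.smoothTransition ((t - a) / (b - a))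

lemma contDiff_stp (a b : ℝ) : ContDiff ℝ (⊤ : ℕ∞) (stp a b) :=
  Real.smoothTransition.contDiff.comp (by fun_prop)

lemma stp_nonneg (a b t : ℝ) : 0 ≤ stp a b t := Real.smoothTransition.nonneg _

lemma stp_le_one (a b t : ℝ) : stp a b t ≤ 1 := Real.smoothTransition.le_one _

lemma stp_zero {a b t : ℝ} (hab : a < b) (h : t ≤ a) : stp a b t = 0 :=
  Real.smoothTransition.zero_of_nonpos
    (div_nonpos_of_nonpos_of_nonneg (by linarith) (by linarith))

lemma stp_one {a b t : ℝ} (hab : a < b) (h : b ≤ t) : stp a b t = 1 :=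
  Real.smoothTransition.one_of_one_le (by rw [le_div_iff₀ (by linarith)]; linarith)

lemma stp_monotone {a b : ℝ} (hab : a < b) : Monotone (stp a b) := fun s t h =>
  Real.smoothTransition.monotone (div_le_div_of_nonneg_right (by linarith) (by linarith))

/-- A radial cut-off: `0` for `|x| ≤ a`, `1` for `|x| ≥ b`. Writing it as a function of `|x|^{-2}`,
a bounded symbol, makes it a symbol of order zero by composition. -/
def rad (a b : ℝ) (p : Phase n) : ℝ := 1 - stp ((b ^ 2)⁻¹) ((a ^ 2)⁻¹) (sqn p.1 ^ (-1 : ℝ))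

lemma symOn_rad (a b : ℝ) : SymOn (shell n δ) 0 (rad a b) := by
  have hO := isOpen_shell (n := n) δ
  exact (SymOn.const 1).sub hO
    (((symOn_sqn_rpow (-1)).mono (by norm_num)).comp_smooth hO (contDiff_stp _ _))

lemma rad_nonneg (a b : ℝ) (p : Phase n) : 0 ≤ rad a b p := sub_nonneg.2 (stp_le_one _ _ _)

lemma rad_le_one (a b : ℝ) (p : Phase n) : rad a b p ≤ 1 :=
  sub_le_self _ (stp_nonneg _ _ _)

lemma rad_zero {a b : ℝ} (ha : 0 < a) (hab : a < b) {p : Phase n} (hp : p ∈ shell n δ)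
    (h : nrm p.1 ≤ a) : rad a b p = 0 := by
  have h0 : 0 < sqn p.1 := lt_trans one_pos hp.1
  rw [rad, stp_one, sub_self]
  · exact inv_strictAnti₀ (by positivity) (by gcongr)
  · rw [Real.rpow_neg_one]
    exact inv_anti₀ h0 (by rw [← nrm_sq]; exact pow_le_pow_left₀ (nrm_nonneg _) h 2)

lemma rad_one {a b : ℝ} (ha : 0 < a) (hab : a < b) {p : Phase n}
    (h : b ≤ nrm p.1) : rad a b p = 1 := by
  have hb : 0 < b := ha.trans hab
  rw [rad, stp_zero, sub_zero]
  · exact inv_strictAnti₀ (by positivity) (by gcongr)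
  · rw [Real.rpow_neg_one]
    exact inv_anti₀ (by positivity) (by rw [← nrm_sq]; exact pow_le_pow_left₀ hb.le h 2)

lemma continuous_nrm : Continuous (nrm : (Fin n → ℝ) → ℝ) := by
  unfold nrm; fun_prop

lemma shell_of_le {r e : ℝ} (hr : 1 < r) (hδ0 : 0 < δ) (he : e < 16 * δ ^ 2) {p : Phase n}
    (h : r ≤ nrm p.1 ∧ (sqn p.2 - 1) ^ 2 ≤ e) : p ∈ shell n δ := by
  refine ⟨?_, ?_⟩
  · rw [← nrm_sq]; nlinarith [h.1]
  · apply abs_lt_of_sq_lt_sq _ (by linarith)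
    nlinarith [h.2]

lemma isClosed_slab (r e : ℝ) :
    IsClosed {p : Phase n | r ≤ nrm p.1 ∧ (sqn p.2 - 1) ^ 2 ≤ e} :=
  (isClosed_le continuous_const (continuous_nrm.comp continuous_fst)).inter
    (isClosed_le (((contDiff_sqn.continuous.comp continuous_snd).sub continuous_const).pow 2)
      continuous_const)

lemma isClosed_region (hnd : ∀ ξ : Fin n → ℝ, (∀ j, ∑ k, g₀ j k * ξ k = 0) → ξ = 0)
    (hδ0 : 0 < δ) (hδ : δ < 1 / 4) {r e : ℝ} (hr : 1 < r) (he : e < 16 * δ ^ 2)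
    {T : Set ℝ} (hT : IsClosed T) :
    IsClosed {p : Phase n | (r ≤ nrm p.1 ∧ (sqn p.2 - 1) ^ 2 ≤ e) ∧ betaF g₀ p.1 p.2 ∈ T} :=
  ((symOn_betaF hnd hδ).1.continuousOn.mono fun _ hp =>
    shell_of_le hr hδ0 he hp).preimage_isClosed_of_isClosed (isClosed_slab r e) hT

lemma escF_nonneg (ν : ℝ) (p : Phase n) : 0 ≤ escF g₀ ν p := by
  have := (abs_le.1 (abs_betaF_le (g₀ := g₀) p.1 p.2)).2
  exact mul_nonneg (Real.rpow_nonneg (sqn_nonneg _) _) (by linarith)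

/-- The escape function is small far out. -/
lemma exists_escF_le {ν ε : ℝ} (hν : 0 < ν) (hε : 0 < ε) :
    ∃ R₁, ∀ p : Phase n, R₁ ≤ nrm p.1 → escF g₀ ν p ≤ ε := by
  have hlim := (tendsto_rpow_neg_atTop hν).eventually
    (Iic_mem_nhds (show (0 : ℝ) < ε / 3 by positivity))
  obtain ⟨R₁, hR₁⟩ := Filter.eventually_atTop.1 hlim
  refine ⟨R₁, fun p hp => ?_⟩
  have h1 : nrm p.1 ^ (-ν) ≤ ε / 3 := hR₁ _ hp
  have h2 := (abs_le.1 (abs_betaF_le (g₀ := g₀) p.1 p.2)).1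
  have h3 : sqn p.1 ^ (-ν / 2) = nrm p.1 ^ (-ν) := by
    rw [← nrm_sq, ← Real.rpow_two, ← Real.rpow_mul (nrm_nonneg _)]; congr 1; ring
  have h4 := Real.rpow_nonneg (nrm_nonneg p.1) (-ν)
  rw [escF, h3]
  nlinarith


/-! ### Poisson brackets with `p₂` -/

lemma PB_eq_hamD {a : (Fin n → ℝ) → (Fin n → ℝ) → ℝ} {p : Phase n}
    (ha : DifferentiableAt ℝ (fun p : Phase n => a p.1 p.2) p) :
    PB (p2 g) a p.1 p.2 = hamD g (fun p : Phase n => a p.1 p.2) p :=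
  Finset.sum_congr rfl fun j _ => by rw [phaseD_inl_eq_pdx j ha, phaseD_inr_eq_pdxi j ha]

lemma hamD_congr {a b : Phase n → ℝ} {p : Phase n} (h : a =ᶠ[𝓝 p] b) : hamD g a p = hamD g b p := by
  simp only [hamD, phaseD, h.fderiv_eq]

lemma hamD_const (c : ℝ) (p : Phase n) : hamD g (fun _ => c) p = 0 := by
  simp [hamD, phaseD]

lemma hamD_comp {a : Phase n → ℝ} {φ : ℝ → ℝ} {p : Phase n} (ha : DifferentiableAt ℝ a p)
    (hφ : DifferentiableAt ℝ φ (a p)) :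
    hamD g (fun p => φ (a p)) p = deriv φ (a p) * hamD g a p := by
  have h := hφ.hasDerivAt.comp_hasFDerivAt p ha.hasFDerivAt
  have h2 : ∀ i, phaseD i (fun p => φ (a p)) p = deriv φ (a p) * phaseD i a p := by
    intro i
    rw [phaseD, show (fun p => φ (a p)) = φ ∘ a from rfl, h.fderiv]
    simp [phaseD]
  simp only [hamD, h2, Finset.mul_sum]
  exact Finset.sum_congr rfl fun j _ => by ring

/-- The bracket of `p₂` with a symbol of order zero has order `-1` on the shell. -/
lemma exists_hamD_le (hg : AssumpG g g₀ μ) (hμ : 0 < μ) (hδ : δ < 1 / 4) {a : Phase n → ℝ}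
    (ha : SymOn (shell n δ) 0 a) :
    ∃ M ≥ 0, ∀ p ∈ shell n δ, hamD g a p ≤ M * sqn p.1 ^ (-1 / 2 : ℝ) := by
  have hO := isOpen_shell (n := n) δ
  obtain ⟨C, hC, hCb⟩ := p2_bounds hg hδ
  have hx : ∀ j, ∃ A > 0, ∀ p ∈ shell n δ, |phaseD (.inl j) a p| ≤ A * jap p.1 ^ (-1 : ℝ) :=
    fun j => by
      obtain ⟨A, hA, h⟩ := (ha.phaseD hO (.inl j)).bound
      exact ⟨A, hA, fun p hp => by simpa [phaseOrd] using h p hp⟩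
  have hξ : ∀ j, ∃ B > 0, ∀ p ∈ shell n δ, |phaseD (.inr j) a p| ≤ B := fun j => by
    obtain ⟨B, hB, h⟩ := (ha.phaseD hO (.inr j)).bound
    exact ⟨B, hB, fun p hp => by simpa [phaseOrd] using h p hp⟩
  have hv : ∀ j, ∃ V > 0, ∀ p ∈ shell n δ, |vv g₀ p.2 j| ≤ V := fun j => by
    obtain ⟨B, hB, h⟩ := (symOn_vv (n := n) (g₀ := g₀) hδ j).bound
    exact ⟨B, hB, fun p hp => by simpa using h p hp⟩
  choose A hA hx using hx
  choose B hB hξ using hξ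
  choose V hV hv using hv
  refine ⟨∑ j, ((C + V j) * A j + C * B j), Finset.sum_nonneg fun j _ => ?_, fun p hp => ?_⟩
  · have := hA j
    have := hB j
    have := hV j
    positivity
  have hj : jap p.1 ^ (-1 : ℝ) ≤ sqn p.1 ^ (-1 / 2 : ℝ) := by
    rw [Real.rpow_neg_one, ← nrm_inv]
    refine inv_anti₀ (Real.sqrt_pos.2 (lt_trans one_pos hp.1)) (nrm_le_jap _)
  have hj0 := Real.rpow_nonneg (jap_pos p.1).le (-1)
  rw [Finset.sum_mul]
  refine Finset.sum_le_sum fun j _ => ?_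
  obtain ⟨h1, h2⟩ := hCb p hp j
  have h3 : jap p.1 ^ (-μ) ≤ 1 := Real.rpow_le_one_of_one_le_of_nonpos (one_le_jap _) (by linarith)
  have h4 : jap p.1 ^ (-μ - 1) ≤ jap p.1 ^ (-1 : ℝ) :=
    Real.rpow_le_rpow_of_exponent_le (one_le_jap _) (by linarith)
  have h5 : |pdxi j (p2 g) p.1 p.2| ≤ C + V j := by
    have h6 := abs_add_le (pdxi j (p2 g) p.1 p.2 - vv g₀ p.2 j) (vv g₀ p.2 j)
    rw [sub_add_cancel] at h6
    have := hv j p hp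
    nlinarith
  have hAj := hA j
  have hBj := hB j
  have hVj := hV j
  calc _ ≤ |pdxi j (p2 g) p.1 p.2 * phaseD (.inl j) a p| +
        |pdx j (p2 g) p.1 p.2 * phaseD (.inr j) a p| :=
        (le_abs_self _).trans (abs_sub _ _)
    _ ≤ (C + V j) * (A j * jap p.1 ^ (-1 : ℝ)) + (C * jap p.1 ^ (-1 : ℝ)) * B j := by
        rw [abs_mul, abs_mul]
        refine add_le_add (mul_le_mul h5 (hx j p hp) (abs_nonneg _) (by positivity))
          (mul_le_mul (h2.trans (by gcongr)) (hξ j p hp) (abs_nonneg _) (by positivity))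
    _ = ((C + V j) * A j + C * B j) * jap p.1 ^ (-1 : ℝ) := by ring
    _ ≤ _ := by gcongr

end


/-- Lemma 5.1, outgoing cut-off. Under Assumption A (top
order), fix `σ_∞ ∈ (−1,0)`, `ν ∈ (0,μ)`, `γ ∈ (0,1)`, `δ ∈ (0,1/4)` and
`σ_∞ < σ < σ' < 0`. Then there are `R₀ > 0` and `C₀ > 1` such that for every
`R ≥ R₀` there is `ζ₊ ∈ S^{0,0}` with values in `[0,1]`,
`supp ζ₊ ⊂ Γ₊(4δ,σ,R)`, `ζ₊ = 1` on `Γ₊(δ,σ',C₀R)`, and a remainder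
`ρ ∈ S^{0,−1+γ}` with `{p₂, ζ₊} ≤ ρ` everywhere and
`supp ρ ⊂ {1−4δ ≤ |ξ|² ≤ 1+4δ, (|x| ≤ C₀R or σ ≤ β ≤ σ')}`. -/
theorem stmt_8 {n : ℕ} (hn : 2 ≤ n)
    (g : Fin n → Fin n → (Fin n → ℝ) → ℝ) (g₀ : Fin n → Fin n → ℝ)
    (μ : ℝ) (hμ0 : 0 < μ) (hμ1 : μ < 1) (hg : AssumpG g g₀ μ)
    (σinf ν γ δ σ σ' : ℝ) (hσinf : σinf ∈ Set.Ioo (-1 : ℝ) 0)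
    (hν : ν ∈ Set.Ioo 0 μ) (hγ : γ ∈ Set.Ioo (0 : ℝ) 1)
    (hδ : δ ∈ Set.Ioo (0 : ℝ) (1 / 4))
    (hσinfσ : σinf < σ) (hσσ' : σ < σ') (hσ'0 : σ' < 0) :
    ∃ R₀ > (0 : ℝ), ∃ C₀ > (1 : ℝ), ∀ R ≥ R₀,
      ∃ ζ : (Fin n → ℝ) → (Fin n → ℝ) → ℝ,
        SymClass 0 0 ζ ∧
        (∀ x ξ, ζ x ξ ∈ Set.Icc (0 : ℝ) 1) ∧
        tsupport (fun p : (Fin n → ℝ) × (Fin n → ℝ) => ζ p.1 p.2)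
          ⊆ Gp g₀ (4 * δ) σ R ∧
        (∀ p ∈ Gp g₀ δ σ' (C₀ * R), ζ p.1 p.2 = 1) ∧
        ∃ ρ : (Fin n → ℝ) → (Fin n → ℝ) → ℝ,
          SymClass 0 (-1 + γ) ρ ∧
          (∀ x ξ, PB (p2 g) ζ x ξ ≤ ρ x ξ) ∧
          tsupport (fun p : (Fin n → ℝ) × (Fin n → ℝ) => ρ p.1 p.2)
            ⊆ {p : (Fin n → ℝ) × (Fin n → ℝ) |
                (1 - 4 * δ ≤ nrm p.2 ^ 2 ∧ nrm p.2 ^ 2 ≤ 1 + 4 * δ) ∧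
                (nrm p.1 ≤ C₀ * R ∨
                  (σ ≤ betaF g₀ p.1 p.2 ∧ betaF g₀ p.1 p.2 ≤ σ'))} := by
  obtain ⟨hδ0, hδ4⟩ := hδ
  have hσm1 : -1 < σ := hσinf.1.trans hσinfσ
  have hσ0 : σ < 0 := hσσ'.trans hσ'0
  have hnd := hg.nondeg0
  have hO := isOpen_shell (n := n) δ
  -- the exponent of the escape function; it must be small for `escape_rate_ge`
  obtain ⟨κ, hκ, hκμ, hκσ⟩ : ∃ κ : ℝ, 0 < κ ∧ κ < μ ∧ 6 * κ ≤ 1 - σ ^ 2 := by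
    have h1 : 0 < 1 - σ ^ 2 := by nlinarith
    refine ⟨min (μ / 2) ((1 - σ ^ 2) / 6), by positivity, ?_, ?_⟩
    · exact (min_le_left _ _).trans_lt (by linarith)
    · have := min_le_right (μ / 2) ((1 - σ ^ 2) / 6)
      linarith
  obtain ⟨R₁, hR₁⟩ := hamD_enF_nonneg hg hδ4 hκ hκμ hκσ hσ0
  obtain ⟨R₂, hR₂⟩ := exists_escF_le (g₀ := g₀) hκ (show 0 < δ ^ 2 by positivity)
  refine ⟨max 3 (max R₁ R₂), by positivity, 3, by norm_num, fun R hR => ?_⟩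
  have hR3 : 3 ≤ R := (le_max_left _ _).trans hR
  have hRR₁ : R₁ ≤ R := ((le_max_left _ _).trans (le_max_right _ _)).trans hR
  have hRR₂ : R₂ ≤ R := ((le_max_right _ _).trans (le_max_right _ _)).trans hR
  have hR0 : 0 < R := by linarith
  have hδsq : 0 < δ ^ 2 := by positivity
  -- intermediate angles `σ < s₀ < s₁ < s₂ < s₃ < σ'`
  obtain ⟨s₀, hs₀, hs₀'⟩ := exists_between hσσ'
  obtain ⟨s₁, hs₁, hs₁'⟩ := exists_between hs₀'
  obtain ⟨s₂, hs₂, hs₂'⟩ := exists_between hs₁'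
  obtain ⟨s₃, hs₃, hs₃'⟩ := exists_between hs₂'
  set b : Phase n → ℝ := fun p => betaF g₀ p.1 p.2 with hb
  have hbS : SymOn (shell n δ) 0 b := symOn_betaF hnd hδ4
  set F : Phase n → ℝ := fun p => rad R (2 * R) p * stp s₁ s₂ (b p) *
    (1 - stp (δ ^ 2) (4 * δ ^ 2) (enF g₀ κ p)) with hF
  have hFS : SymOn (shell n δ) 0 F :=
    ((symOn_rad _ _).mul0 hO (hbS.comp_smooth hO (contDiff_stp _ _))).mul0 hO
      ((SymOn.const 1).sub hO ((symOn_enF hnd hδ4 hκ.le).comp_smooth hO (contDiff_stp _ _)))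
  have hF0 : ∀ p, 0 ≤ F p := fun p =>
    mul_nonneg (mul_nonneg (rad_nonneg _ _ _) (stp_nonneg _ _ _)) (sub_nonneg.2 (stp_le_one _ _ _))
  have hF1 : ∀ p, F p ≤ 1 := fun p =>
    mul_le_one₀ (mul_le_one₀ (rad_le_one _ _ _) (stp_nonneg _ _ _) (stp_le_one _ _ _))
      (sub_nonneg.2 (stp_le_one _ _ _)) (sub_le_self _ (stp_nonneg _ _ _))
  set K : Set (Phase n) := {p | (R ≤ nrm p.1 ∧ (sqn p.2 - 1) ^ 2 ≤ 5 * δ ^ 2) ∧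
    betaF g₀ p.1 p.2 ∈ Set.Ici s₁} with hK
  have hKc : IsClosed K := isClosed_region hnd hδ0 hδ4 (by linarith) (by linarith) isClosed_Ici
  have hKU : K ⊆ shell n δ := fun p hp => shell_of_le (by linarith) hδ0 (by linarith) hp.1
  have hFK : ∀ p ∈ shell n δ, p ∉ K → F p = 0 := by
    intro p hp hpK
    by_contra hne
    have hx : R ≤ nrm p.1 := by
      by_contra! h
      exact hne (by simp only [hF, rad_zero hR0 (by linarith : R < 2 * R) hp h.le, zero_mul])
    have hβ : s₁ ≤ b p := by
      by_contra! h
      exact hne (by simp only [hF, stp_zero hs₂ h.le, mul_zero, zero_mul])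
    have he : enF g₀ κ p ≤ 4 * δ ^ 2 := by
      by_contra! h
      exact hne (by
        simp only [hF, stp_one (by linarith : δ ^ 2 < 4 * δ ^ 2) h.le, sub_self, mul_zero])
    have hm := hR₂ p (hRR₂.trans hx)
    refine hpK ⟨⟨hx, ?_⟩, hβ⟩
    unfold enF at he
    linarith
  have hζ := globSym_indicator hO hKc hKU hFS hFK
  set ζ : (Fin n → ℝ) → (Fin n → ℝ) → ℝ := fun x ξ => (shell n δ).indicator F (x, ξ) with hζdef
  have hζF : ∀ p ∈ shell n δ, ζ p.1 p.2 = F p := fun p hp => Set.indicator_of_mem hp F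
  obtain ⟨M, hM, hMb⟩ := exists_hamD_le hg hμ0 hδ4 hζ.2.2
  refine ⟨ζ, hζ.symClass hO (shell_jap_le hδ4) hKc hKU, fun x ξ => ?_, ?_, ?_, ?_⟩
  · by_cases h : (x, ξ) ∈ shell n δ
    · rw [hζF (x, ξ) h]; exact ⟨hF0 _, hF1 _⟩
    · simp [hζdef, Set.indicator_of_notMem h]
  · refine (hζ.tsupport_subset hKc).trans fun p hp => ?_
    have h1 := abs_lt.1 (hKU hp).2
    refine ⟨?_, ?_, (hs₀.trans hs₁).le.trans hp.2, hp.1.1⟩ <;> rw [nrm_sq] <;> linarith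
  · rintro p ⟨h1, h2, h3, h4⟩
    rw [nrm_sq] at h1 h2
    have he : (sqn p.2 - 1) ^ 2 ≤ δ ^ 2 := sq_le_sq' (by linarith) (by linarith)
    have hp : p ∈ shell n δ :=
      shell_of_le (r := R) (e := δ ^ 2) (by linarith) hδ0 (by linarith) ⟨by linarith, he⟩
    have hm := escF_nonneg (g₀ := g₀) κ p
    have hen : enF g₀ κ p ≤ δ ^ 2 := by unfold enF; linarith
    rw [hζF p hp]
    simp only [hF, rad_one hR0 (by linarith : R < 2 * R) (by linarith : 2 * R ≤ nrm p.1),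
      stp_one hs₂ (by linarith : s₂ ≤ b p), stp_zero (by linarith : δ ^ 2 < 4 * δ ^ 2) hen]
    norm_num
  -- the remainder: `M / |x|` localised where `ζ` differs from the monotone energy cut-off
  set G : Phase n → ℝ := fun p => M * (sqn p.1 ^ (-1 / 2 : ℝ) *
    (rad (R / 2) R p * stp s₀ s₁ (b p) * (1 - stp (5 * δ ^ 2) (6 * δ ^ 2) ((sqn p.2 - 1) ^ 2)) *
      (1 - rad (2 * R) (3 * R) p * stp s₂ s₃ (b p)))) with hG
  have hGS : SymOn (shell n δ) (-1 + γ) G := by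
    have h1 : SymOn (shell n δ) 0 _ :=
      (((symOn_rad (R / 2) R).mul0 hO (hbS.comp_smooth hO (contDiff_stp s₀ s₁))).mul0 hO
        ((SymOn.const 1).sub hO
          ((symOn_energy hδ4).comp_smooth hO (contDiff_stp (5 * δ ^ 2) (6 * δ ^ 2))))).mul0 hO
        ((SymOn.const 1).sub hO
          ((symOn_rad (2 * R) (3 * R)).mul0 hO (hbS.comp_smooth hO (contDiff_stp s₂ s₃))))
    exact (((symOn_sqn_rpow (-1 / 2)).mul hO h1).const_mul hO M).mono (by linarith [hγ.1])
  have hG0 : ∀ p, 0 ≤ G p := fun p => by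
    refine mul_nonneg hM (mul_nonneg (Real.rpow_nonneg (sqn_nonneg _) _) (mul_nonneg (mul_nonneg
      (mul_nonneg (rad_nonneg _ _ _) (stp_nonneg _ _ _)) (sub_nonneg.2 (stp_le_one _ _ _)))
      (sub_nonneg.2 ?_)))
    exact mul_le_one₀ (rad_le_one _ _ _) (stp_nonneg _ _ _) (stp_le_one _ _ _)
  set L : Set (Phase n) :=
    ({p | (R / 2 ≤ nrm p.1 ∧ (sqn p.2 - 1) ^ 2 ≤ 6 * δ ^ 2) ∧ betaF g₀ p.1 p.2 ∈ Set.Ici s₀} ∩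
      {p | nrm p.1 ≤ 3 * R}) ∪
    {p | (R / 2 ≤ nrm p.1 ∧ (sqn p.2 - 1) ^ 2 ≤ 6 * δ ^ 2) ∧ betaF g₀ p.1 p.2 ∈ Set.Icc s₀ s₃}
    with hL
  have hLc : IsClosed L :=
    ((isClosed_region hnd hδ0 hδ4 (by linarith) (by linarith) isClosed_Ici).inter
      (isClosed_le (continuous_nrm.comp continuous_fst) continuous_const)).union
      (isClosed_region hnd hδ0 hδ4 (by linarith) (by linarith) isClosed_Icc)
  have hLU : L ⊆ shell n δ := by
    rintro p (hp | hp)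
    · exact shell_of_le (r := R / 2) (by linarith) hδ0 (by linarith) hp.1.1
    · exact shell_of_le (r := R / 2) (by linarith) hδ0 (by linarith) hp.1
  have hGL : ∀ p ∈ shell n δ, p ∉ L → G p = 0 := by
    intro p hp hpL
    by_contra hne
    have hx : R / 2 ≤ nrm p.1 := by
      by_contra! h
      exact hne (by
        simp only [hG, rad_zero (by linarith) (by linarith : R / 2 < R) hp h.le, zero_mul, mul_zero])
    have hβ : s₀ ≤ b p := by
      by_contra! h
      exact hne (by simp only [hG, stp_zero hs₁ h.le, mul_zero, zero_mul])
    have he : (sqn p.2 - 1) ^ 2 ≤ 6 * δ ^ 2 := by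
      by_contra! h
      exact hne (by
        simp only [hG, stp_one (by linarith : 5 * δ ^ 2 < 6 * δ ^ 2) h.le, sub_self, mul_zero,
          zero_mul])
    rcases le_or_gt (nrm p.1) (3 * R) with h3 | h3
    · exact hpL (Or.inl ⟨⟨⟨hx, he⟩, hβ⟩, h3⟩)
    · rcases le_or_gt (b p) s₃ with h4 | h4
      · exact hpL (Or.inr ⟨⟨hx, he⟩, hβ, h4⟩)
      · exact hne (by
          simp only [hG, rad_one (by linarith) (by linarith : 2 * R < 3 * R) h3.le,
            stp_one hs₃ h4.le, mul_one, sub_self, mul_zero])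
  have hρ := globSym_indicator hO hLc hLU hGS hGL
  refine ⟨fun x ξ => (shell n δ).indicator G (x, ξ),
    hρ.symClass hO (shell_jap_le hδ4) hLc hLU, fun x ξ => ?_, ?_⟩
  · have hρ0 : 0 ≤ (shell n δ).indicator G (x, ξ) := Set.indicator_nonneg (fun p _ => hG0 p) _
    have hPB := PB_eq_hamD (g := g) (p := (x, ξ)) (hζ.1.differentiable (by simp) (x, ξ))
    simp only at hPB
    rw [hPB]
    by_cases hpK : (x, ξ) ∈ K
    swap
    · -- off `K` the function `ζ` vanishes identically
      refine le_trans (le_of_eq ?_) hρ0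
      rw [hamD_congr (b := fun _ => 0) (Filter.eventuallyEq_of_mem
        (hKc.isOpen_compl.mem_nhds hpK) fun p hp => hζ.2.1 p hp), hamD_const]
    have hpU := hKU hpK
    by_cases hfar : 2 * R < nrm x ∧ s₂ < b (x, ξ)
    · -- here `ζ` is a nonincreasing function of `enF`, which grows along the flow
      refine le_trans ?_ hρ0
      have hev : (fun p : Phase n => ζ p.1 p.2) =ᶠ[𝓝 (x, ξ)]
          fun p => (fun t => 1 - stp (δ ^ 2) (4 * δ ^ 2) t) (enF g₀ κ p) := by
        have h1 : ∀ᶠ p : Phase n in 𝓝 (x, ξ), 2 * R < nrm p.1 :=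
          (continuous_nrm.comp continuous_fst).continuousAt.eventually (lt_mem_nhds hfar.1)
        have h2 : ∀ᶠ p : Phase n in 𝓝 (x, ξ), s₂ < b p :=
          (hbS.1.continuousOn.continuousAt (hO.mem_nhds hpU)).eventually (lt_mem_nhds hfar.2)
        filter_upwards [h1, h2, hO.mem_nhds hpU] with p hp1 hp2 hp3
        rw [hζF p hp3]
        simp only [hF, rad_one hR0 (by linarith : R < 2 * R) hp1.le, stp_one hs₂ hp2.le, one_mul]
      have hdst : Differentiable ℝ (stp (δ ^ 2) (4 * δ ^ 2)) :=
        (contDiff_stp _ _).differentiable (by simp)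
      rw [hamD_congr hev, hamD_comp ((symOn_enF hnd hδ4 hκ.le).differentiableAt hO hpU)
        ((hdst _).const_sub 1), deriv_const_sub]
      have h1 : 0 ≤ deriv (stp (δ ^ 2) (4 * δ ^ 2)) (enF g₀ κ (x, ξ)) :=
        (stp_monotone (by linarith)).deriv_nonneg
      have h2 := hR₁ (x, ξ) hpU (hRR₁.trans hpK.1.1) ((hs₀.trans hs₁).le.trans hpK.2)
      nlinarith
    · -- elsewhere on `K` all the cut-offs in `G` take the value that makes it equal to `M / |x|`
      have hGe : G (x, ξ) = M * sqn x ^ (-1 / 2 : ℝ) := by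
        have h1 : rad (2 * R) (3 * R) ((x, ξ) : Phase n) * stp s₂ s₃ (b (x, ξ)) = 0 := by
          rcases le_or_gt (nrm x) (2 * R) with h | h
          · rw [rad_zero (by linarith) (by linarith) hpU h, zero_mul]
          · rw [stp_zero hs₃ (not_lt.1 fun h' => hfar ⟨h, h'⟩), mul_zero]
        simp only [hG, h1, rad_one (by linarith) (by linarith : R / 2 < R) hpK.1.1,
          stp_one hs₁ (show s₁ ≤ b (x, ξ) from hpK.2),
          stp_zero (by linarith : 5 * δ ^ 2 < 6 * δ ^ 2) hpK.1.2]
        norm_num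
      show _ ≤ (shell n δ).indicator G (x, ξ)
      rw [Set.indicator_of_mem hpU, hGe]
      exact hMb (x, ξ) hpU
  · refine (hρ.tsupport_subset hLc).trans fun p hp => ?_
    have h1 := abs_lt.1 (hLU hp).2
    refine ⟨by rw [nrm_sq]; constructor <;> linarith, ?_⟩
    rcases hp with hp | hp
    · exact Or.inl hp.2
    · exact Or.inr ⟨hs₀.le.trans hp.2.1, hp.2.2.trans hs₃'.le⟩
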